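/- arXiv:2103.13731 — 2 statements merged into one kernel-verified Lean document; each statement's English description precedes it below -/
import Mathlib

section
/- Let a ≥ b be positive integers and c a positive integer with gcd(a,c) = gcd(b,c) = 1, let Γ be the Z-grading of K[x,y,z] with deg x = a, deg y = b, deg z = −c, and let q̂ = max{q ∈ Z : bq ≡ a (mod c) and bq < a}. If q̂ = 1, then every Γ-graded automorphism of K[x,y,z] is graded-tame, i.e., a composition of Γ-graded elementary and Γ-graded linear automorphisms. -/
open MvPolynomial

/-- An automorphism of `K[x,y,z]` is *elementary* if it sends one variable to itself plus
a polynomial in the other two variables and fixes the other variables. -/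
def IsElementary {K : Type*} [CommRing K]
    (φ : MvPolynomial (Fin 3) K ≃ₐ[K] MvPolynomial (Fin 3) K) : Prop :=
  ∃ (i : Fin 3) (F : MvPolynomial (Fin 3) K), i ∉ F.vars ∧
    φ (X i) = X i + F ∧ ∀ j : Fin 3, j ≠ i → φ (X j) = X j

/-- An automorphism of `K[x,y,z]` is *linear* if it sends each variable to a `K`-linear
combination of the variables. -/
def IsLinearAut {K : Type*} [CommRing K]
    (φ : MvPolynomial (Fin 3) K ≃ₐ[K] MvPolynomial (Fin 3) K) : Prop :=
  ∀ i : Fin 3, ∃ c : Fin 3 → K, φ (X i) = ∑ j : Fin 3, C (c j) * X j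

/-- For the `ℤ`-grading of `K[x,y,z]` with weights `w`, an automorphism is *graded*
if it maps each homogeneous component into itself. -/
def IsGraded {K : Type*} [CommRing K] (w : Fin 3 → ℤ)
    (φ : MvPolynomial (Fin 3) K ≃ₐ[K] MvPolynomial (Fin 3) K) : Prop :=
  ∀ (d : ℤ) (f : MvPolynomial (Fin 3) K),
    f.IsWeightedHomogeneous w d → (φ f).IsWeightedHomogeneous w d

/-- A graded automorphism is *graded-tame* if it is a composition of graded elementary
and graded linear automorphisms. -/
def IsGradedTame {K : Type*} [CommRing K] (w : Fin 3 → ℤ)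
    (φ : MvPolynomial (Fin 3) K ≃ₐ[K] MvPolynomial (Fin 3) K) : Prop :=
  ∃ l : List (MvPolynomial (Fin 3) K ≃ₐ[K] MvPolynomial (Fin 3) K),
    (∀ ψ ∈ l, IsGraded w ψ ∧ (IsElementary ψ ∨ IsLinearAut ψ)) ∧ φ = l.prod

/-!
An automorphism `φ` compatible with the grading sends `z` to a multiple of `z`, so the Jacobian of
`(φ x, φ y)` with respect to `(x, y)` is a nonzero constant. Measure polynomials by their degree in
`x` and `y`, and let `n₀, n₁` be the degrees of `φ x, φ y`.

One of `n₀, n₁` divides the other. Otherwise let `Q` be the preimage of `x`. Applying operators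
`y ∂/∂y - j` to `Q` isolates a monomial of its leading form for the weights `(n₀, n₁, 0)`, and the
constant Jacobian shows that each operator raises the degree of the image by at most
`n₀ + n₁ - 2`. The isolated monomial has an image of degree larger than this allows, because
`n₀ + n₁ ≤ lcm n₀ n₁`.

If `n₀ + n₁ > 2`, the leading forms of `φ x` and `φ y` have zero Jacobian, and Euler's identities
for the two gradings make two such forms of the same bidegree proportional. By the grading
`n₀ ≡ n₁ ≡ 1 (mod c)`, hence their quotient `q` is `1` modulo `c` too. The condition `q̂ = 1` says
`a = b + k c` with `0 < k ≤ b`; it provides an `s` for which `x ↦ x - r y ^ q z ^ s`, or its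
analogue with `x` and `y` exchanged, is graded, and for a suitable `r` it lowers `n₀ + n₁`.
-/

namespace GradedTame

open Finsupp (weight)

section WeightedDegree

variable {σ τ R : Type*} [CommSemiring R] {w : σ → ℕ}

lemma weightedTotalDegree_le_iff {p : MvPolynomial σ R} {n : ℕ} :
    weightedTotalDegree w p ≤ n ↔ ∀ d ∈ p.support, weight w d ≤ n :=
  Finset.sup_le_iff

lemma le_weightedTotalDegree_of_component_ne_zero {p : MvPolynomial σ R} {n : ℕ}
    (h : weightedHomogeneousComponent w n p ≠ 0) : n ≤ weightedTotalDegree w p := by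
  contrapose! h
  exact weightedHomogeneousComponent_eq_zero n p h

lemma weightedTotalDegree_le_of_isWeightedHomogeneous {p : MvPolynomial σ R} {n : ℕ}
    (hp : IsWeightedHomogeneous w p n) : weightedTotalDegree w p ≤ n :=
  weightedTotalDegree_le_iff.2 fun _ hd => (hp (mem_support_iff.1 hd)).le

lemma weightedHomogeneousComponent_eq_self {p : MvPolynomial σ R} {n : ℕ}
    (hp : IsWeightedHomogeneous w p n) : weightedHomogeneousComponent w n p = p :=
  (weightedHomogeneousComponent_of_mem hp).trans (if_pos rfl)

lemma weightedTotalDegree_C (r : R) : weightedTotalDegree w (C r : MvPolynomial σ R) = 0 :=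
  Nat.le_zero.1 (weightedTotalDegree_le_of_isWeightedHomogeneous (isWeightedHomogeneous_C w r))

lemma weightedTotalDegree_eq_of_isWeightedHomogeneous {p : MvPolynomial σ R} {n : ℕ}
    (hp : IsWeightedHomogeneous w p n) (h0 : p ≠ 0) : weightedTotalDegree w p = n :=
  (weightedTotalDegree_le_of_isWeightedHomogeneous hp).antisymm <|
    le_weightedTotalDegree_of_component_ne_zero <| by
      rwa [weightedHomogeneousComponent_eq_self hp]

lemma weightedTotalDegree_lt_of_component_eq_zero {p : MvPolynomial σ R} {n : ℕ} (hn : 0 < n)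
    (hp : weightedTotalDegree w p ≤ n) (h : weightedHomogeneousComponent w n p = 0) :
    weightedTotalDegree w p < n := by
  refine (Finset.sup_lt_iff (f := weight w) hn).2 fun d hd => ?_
  refine lt_of_le_of_ne (weightedTotalDegree_le_iff.1 hp d hd) fun hdn => ?_
  have hcoeff := congrArg (coeff d) h
  rw [coeff_weightedHomogeneousComponent, if_pos hdn, coeff_zero] at hcoeff
  exact mem_support_iff.1 hd hcoeff

lemma weightedTotalDegree_mul_le (p q : MvPolynomial σ R) :
    weightedTotalDegree w (p * q) ≤ weightedTotalDegree w p + weightedTotalDegree w q := by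
  classical
  refine weightedTotalDegree_le_iff.2 fun d hd => ?_
  obtain ⟨e, he, f, hf, rfl⟩ := Finset.mem_add.1 (support_mul p q hd)
  rw [map_add]
  exact add_le_add (le_weightedTotalDegree w he) (le_weightedTotalDegree w hf)

lemma weightedTotalDegree_C_mul_le (w : σ → ℕ) (r : R) (p : MvPolynomial σ R) :
    weightedTotalDegree w (C r * p) ≤ weightedTotalDegree w p :=
  (weightedTotalDegree_mul_le _ _).trans_eq (by rw [weightedTotalDegree_C, zero_add])

lemma weightedHomogeneousComponent_add_mul {p q : MvPolynomial σ R} {m n : ℕ}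
    (hp : weightedTotalDegree w p ≤ m) (hq : weightedTotalDegree w q ≤ n) :
    weightedHomogeneousComponent w (m + n) (p * q) =
      weightedHomogeneousComponent w m p * weightedHomogeneousComponent w n q := by
  classical
  have coeff_eq_zero : ∀ {r : MvPolynomial σ R} {k : ℕ}, weightedTotalDegree w r ≤ k →
      ∀ d, k < weight w d → coeff d r = 0 := fun hr d hd =>
    notMem_support_iff.1 fun h => hd.not_ge (weightedTotalDegree_le_iff.1 hr d h)
  ext d
  simp only [coeff_weightedHomogeneousComponent, coeff_mul]
  trans ∑ x ∈ Finset.HasAntidiagonal.antidiagonal d,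
      if weight w d = m + n then coeff x.1 p * coeff x.2 q else 0
  · split_ifs <;> simp only [Finset.sum_const_zero]
  refine Finset.sum_congr rfl fun x hx => ?_
  have hd : weight w d = weight w x.1 + weight w x.2 := by
    rw [← Finset.HasAntidiagonal.mem_antidiagonal.1 hx, map_add]
  have h1 := coeff_eq_zero hp x.1
  have h2 := coeff_eq_zero hq x.2
  grind

lemma weightedTotalDegree_prod_le (s : Finset τ) (f : τ → MvPolynomial σ R) :
    weightedTotalDegree w (∏ i ∈ s, f i) ≤ ∑ i ∈ s, weightedTotalDegree w (f i) := by
  classical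
  induction s using Finset.induction_on with
  | empty => exact weightedTotalDegree_le_of_isWeightedHomogeneous (isWeightedHomogeneous_one R w)
  | insert i s hi ih =>
    rw [Finset.prod_insert hi, Finset.sum_insert hi]
    exact (weightedTotalDegree_mul_le _ _).trans (Nat.add_le_add_left ih _)

lemma weightedTotalDegree_pow_le (p : MvPolynomial σ R) (k : ℕ) :
    weightedTotalDegree w (p ^ k) ≤ k * weightedTotalDegree w p := by
  simpa using weightedTotalDegree_prod_le (w := w) (Finset.range k) fun _ => p

lemma weightedHomogeneousComponent_prod (s : Finset τ) {f : τ → MvPolynomial σ R} {n : τ → ℕ}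
    (hf : ∀ i, weightedTotalDegree w (f i) ≤ n i) :
    weightedHomogeneousComponent w (∑ i ∈ s, n i) (∏ i ∈ s, f i) =
      ∏ i ∈ s, weightedHomogeneousComponent w (n i) (f i) := by
  classical
  induction s using Finset.induction_on with
  | empty => exact weightedHomogeneousComponent_eq_self (isWeightedHomogeneous_one R w)
  | insert i s hi ih =>
    have hs := (weightedTotalDegree_prod_le s f).trans (Finset.sum_le_sum fun i _ => hf i)
    rw [Finset.prod_insert hi, Finset.sum_insert hi, Finset.prod_insert hi,
      weightedHomogeneousComponent_add_mul (hf i) hs, ih]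

lemma weightedHomogeneousComponent_mul_pow {p : MvPolynomial σ R} {n : ℕ}
    (hp : weightedTotalDegree w p ≤ n) (k : ℕ) :
    weightedHomogeneousComponent w (k * n) (p ^ k) = weightedHomogeneousComponent w n p ^ k := by
  simpa using weightedHomogeneousComponent_prod (Finset.range k) fun _ => hp

lemma weightedTotalDegree_aeval_monomial_le {f : τ → MvPolynomial σ R} {n : τ → ℕ}
    (hf : ∀ i, weightedTotalDegree w (f i) ≤ n i) (d : τ →₀ ℕ) (r : R) :
    weightedTotalDegree w (aeval f (monomial d r)) ≤ weight n d := by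
  rw [aeval_monomial, Finsupp.weight_apply]
  refine (weightedTotalDegree_mul_le _ _).trans ?_
  rw [algebraMap_eq, weightedTotalDegree_C, zero_add]
  refine (weightedTotalDegree_prod_le _ _).trans (Finset.sum_le_sum fun i _ => ?_)
  exact (weightedTotalDegree_pow_le _ _).trans (Nat.mul_le_mul_left _ (hf i))

lemma weightedHomogeneousComponent_aeval_monomial {f : τ → MvPolynomial σ R} {n : τ → ℕ}
    (hf : ∀ i, weightedTotalDegree w (f i) ≤ n i) (d : τ →₀ ℕ) (r : R) :
    weightedHomogeneousComponent w (weight n d) (aeval f (monomial d r)) =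
      aeval (fun i => weightedHomogeneousComponent w (n i) (f i)) (monomial d r) := by
  rw [aeval_monomial, aeval_monomial, Finsupp.weight_apply, algebraMap_eq,
    weightedHomogeneousComponent_C_mul]
  have hpow i : weightedTotalDegree w (f i ^ d i) ≤ d i * n i :=
    (weightedTotalDegree_pow_le _ _).trans (Nat.mul_le_mul_left _ (hf i))
  congr 1
  refine (weightedHomogeneousComponent_prod d.support hpow).trans ?_
  exact Finset.prod_congr rfl fun i _ => weightedHomogeneousComponent_mul_pow (hf i) _

lemma weightedTotalDegree_sum_le (s : Finset τ) {f : τ → MvPolynomial σ R} {n : ℕ}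
    (hf : ∀ i ∈ s, weightedTotalDegree w (f i) ≤ n) :
    weightedTotalDegree w (∑ i ∈ s, f i) ≤ n := by
  classical
  refine weightedTotalDegree_le_iff.2 fun d hd => ?_
  obtain ⟨i, hi, hdi⟩ := Finset.mem_biUnion.1 (support_sum hd)
  exact (le_weightedTotalDegree w hdi).trans (hf i hi)

lemma weightedTotalDegree_aeval_le {f : τ → MvPolynomial σ R} {n : τ → ℕ}
    (hf : ∀ i, weightedTotalDegree w (f i) ≤ n i) (q : MvPolynomial τ R) :
    weightedTotalDegree w (aeval f q) ≤ weightedTotalDegree n q := by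
  conv_lhs => rw [q.as_sum, map_sum]
  exact weightedTotalDegree_sum_le _ fun d hd =>
    (weightedTotalDegree_aeval_monomial_le hf d _).trans (le_weightedTotalDegree n hd)

lemma weightedHomogeneousComponent_aeval {f : τ → MvPolynomial σ R} {n : τ → ℕ}
    (hf : ∀ i, weightedTotalDegree w (f i) ≤ n i) {q : MvPolynomial τ R} {N : ℕ}
    (hq : weightedTotalDegree n q ≤ N) :
    weightedHomogeneousComponent w N (aeval f q) =
      aeval (fun i => weightedHomogeneousComponent w (n i) (f i))
        (weightedHomogeneousComponent n N q) := by
  conv_lhs => rw [q.as_sum]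
  rw [weightedHomogeneousComponent_apply (w := n) N q, Finset.sum_filter, map_sum, map_sum, map_sum]
  refine Finset.sum_congr rfl fun d hd => ?_
  split_ifs with h
  · rw [← h, weightedHomogeneousComponent_aeval_monomial hf]
  · rw [map_zero]
    refine weightedHomogeneousComponent_eq_zero _ _ ?_
    exact (weightedTotalDegree_aeval_monomial_le hf d _).trans_lt
      (lt_of_le_of_ne (weightedTotalDegree_le_iff.1 hq d hd) h)

/-- The leading form of `p` for the weights `w`: its nonzero homogeneous component of highest
weighted degree, or `0` if `p = 0`. -/
noncomputable def leadingForm (w : σ → ℕ) (p : MvPolynomial σ R) : MvPolynomial σ R :=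
  weightedHomogeneousComponent w (weightedTotalDegree w p) p

lemma isWeightedHomogeneous_leadingForm (p : MvPolynomial σ R) :
    IsWeightedHomogeneous w (leadingForm w p) (weightedTotalDegree w p) :=
  weightedHomogeneousComponent_isWeightedHomogeneous _ _

lemma leadingForm_ne_zero {p : MvPolynomial σ R} (hp : p ≠ 0) : leadingForm w p ≠ 0 := by
  classical
  obtain ⟨d, hd, hdw⟩ := Finset.exists_mem_eq_sup p.support (support_nonempty.2 hp) (weight w)
  refine ne_zero_iff.2 ⟨d, ?_⟩
  rw [leadingForm, coeff_weightedHomogeneousComponent, weightedTotalDegree, if_pos hdw.symm]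
  exact mem_support_iff.1 hd

section NoZeroDivisors

variable [NoZeroDivisors R]

lemma weightedTotalDegree_mul {p q : MvPolynomial σ R} (hp : p ≠ 0) (hq : q ≠ 0) :
    weightedTotalDegree w (p * q) = weightedTotalDegree w p + weightedTotalDegree w q := by
  refine (weightedTotalDegree_mul_le p q).antisymm ?_
  apply le_weightedTotalDegree_of_component_ne_zero
  rw [weightedHomogeneousComponent_add_mul le_rfl le_rfl]
  exact mul_ne_zero (leadingForm_ne_zero hp) (leadingForm_ne_zero hq)

lemma leadingForm_mul (p q : MvPolynomial σ R) :
    leadingForm w (p * q) = leadingForm w p * leadingForm w q := by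
  rcases eq_or_ne p 0 with rfl | hp
  · simp only [leadingForm, zero_mul, map_zero]
  rcases eq_or_ne q 0 with rfl | hq
  · simp only [leadingForm, mul_zero, map_zero]
  rw [leadingForm, weightedTotalDegree_mul hp hq,
    weightedHomogeneousComponent_add_mul le_rfl le_rfl]
  rfl

lemma weightedTotalDegree_pow (p : MvPolynomial σ R) (k : ℕ) :
    weightedTotalDegree w (p ^ k) = k * weightedTotalDegree w p := by
  refine (weightedTotalDegree_pow_le p k).antisymm ?_
  rcases eq_or_ne p 0 with rfl | hp
  · rw [weightedTotalDegree_zero, bot_eq_zero, mul_zero]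
    exact Nat.zero_le _
  apply le_weightedTotalDegree_of_component_ne_zero
  rw [weightedHomogeneousComponent_mul_pow le_rfl]
  exact pow_ne_zero k (leadingForm_ne_zero hp)

lemma leadingForm_pow (p : MvPolynomial σ R) (k : ℕ) :
    leadingForm w (p ^ k) = leadingForm w p ^ k := by
  rw [leadingForm, weightedTotalDegree_pow, weightedHomogeneousComponent_mul_pow le_rfl]
  rfl

end NoZeroDivisors

lemma weightedTotalDegree_sub_le {R : Type*} [CommRing R] (w : σ → ℕ) (p q : MvPolynomial σ R) :
    weightedTotalDegree w (p - q) ≤ max (weightedTotalDegree w p) (weightedTotalDegree w q) := by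
  classical
  refine weightedTotalDegree_le_iff.2 fun d hd => le_max_iff.2 ?_
  exact (Finset.mem_union.1 (support_sub σ p q hd)).imp (le_weightedTotalDegree w)
    (le_weightedTotalDegree w)

end WeightedDegree

section EulerDerivation

variable {σ R : Type*}

/-- The Euler derivation `X i * ∂/∂X i`, which multiplies the monomial `X ^ d` by `d i`. -/
noncomputable def eulerDerivation [CommSemiring R] (i : σ) :
    Derivation R (MvPolynomial σ R) (MvPolynomial σ R) :=
  (X i : MvPolynomial σ R) • pderiv i

section CommSemiring

variable [CommSemiring R]

lemma eulerDerivation_apply (i : σ) (p : MvPolynomial σ R) :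
    eulerDerivation i p = X i * pderiv i p := rfl

lemma coeff_eulerDerivation (i : σ) (p : MvPolynomial σ R) (d : σ →₀ ℕ) :
    coeff d (eulerDerivation i p) = d i * coeff d p := by
  classical
  induction p using MvPolynomial.induction_on' with
  | monomial e r =>
    rw [eulerDerivation_apply, X_mul_pderiv_monomial, coeff_smul, coeff_monomial]
    split_ifs with h
    · rw [h, nsmul_eq_mul]
    · rw [smul_zero, mul_zero]
  | add p q hp hq => rw [map_add, coeff_add, hp, hq, coeff_add, mul_add]

lemma support_eulerDerivation_subset (i : σ) (p : MvPolynomial σ R) :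
    (eulerDerivation i p).support ⊆ p.support := fun d hd => by
  rw [mem_support_iff, coeff_eulerDerivation] at hd
  exact mem_support_iff.2 (right_ne_zero_of_mul hd)

lemma weightedTotalDegree_eulerDerivation_le (w : σ → ℕ) (i : σ) (p : MvPolynomial σ R) :
    weightedTotalDegree w (eulerDerivation i p) ≤ weightedTotalDegree w p :=
  Finset.sup_mono (support_eulerDerivation_subset i p)

lemma weightedTotalDegree_eulerDerivation_mul_le (w : σ → ℕ) (i j : σ)
    (u v : MvPolynomial σ R) :
    weightedTotalDegree w (eulerDerivation i u * eulerDerivation j v) ≤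
      weightedTotalDegree w u + weightedTotalDegree w v :=
  (weightedTotalDegree_mul_le _ _).trans (add_le_add
    (weightedTotalDegree_eulerDerivation_le w i u) (weightedTotalDegree_eulerDerivation_le w j v))

lemma weightedHomogeneousComponent_eulerDerivation (w : σ → ℕ) (n : ℕ) (i : σ)
    (p : MvPolynomial σ R) :
    weightedHomogeneousComponent w n (eulerDerivation i p) =
      eulerDerivation i (weightedHomogeneousComponent w n p) := by
  ext d
  simp only [coeff_eulerDerivation, coeff_weightedHomogeneousComponent, mul_ite, mul_zero]

lemma sum_C_mul_eulerDerivation [Fintype σ] {M : Type*} [AddCommMonoid M] {w : σ → M} {D : M}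
    (κ : M →+ R) {p : MvPolynomial σ R} (hp : IsWeightedHomogeneous w p D) :
    ∑ i, C (κ (w i)) * eulerDerivation i p = C (κ D) * p := by
  ext d
  simp only [coeff_sum, coeff_C_mul, coeff_eulerDerivation]
  rcases eq_or_ne (coeff d p) 0 with h0 | h0
  · simp only [h0, mul_zero, Finset.sum_const_zero]
  · rw [← hp h0, Finsupp.weight_apply, Finsupp.sum_fintype _ _ fun i => zero_smul ℕ (w i), map_sum,
      Finset.sum_mul]
    refine Finset.sum_congr rfl fun i _ => ?_
    rw [map_nsmul, nsmul_eq_mul, ← mul_assoc, mul_comm (κ (w i))]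

end CommSemiring

variable [LinearOrder σ] [WellFoundedGT σ]

open MonomialOrder in
lemma lex_degree_eq_of_eulerDerivation_mul_eq [CommRing R] [IsDomain R] [CharZero R]
    {p q : MvPolynomial σ R} (hp : p ≠ 0) (hq : q ≠ 0)
    (h : ∀ i, eulerDerivation i p * q = p * eulerDerivation i q) :
    lex.degree p = lex.degree q := by
  have degree_le (i : σ) (r : MvPolynomial σ R) :
      lex.toSyn (lex.degree (eulerDerivation i r)) ≤ lex.toSyn (lex.degree r) :=
    lex.degree_le_iff.2 fun d hd => lex.le_degree (support_eulerDerivation_subset i r hd)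
  ext i
  have hcoeff := congrArg (coeff (lex.degree p + lex.degree q)) (h i)
  rw [lex.coeff_mul_of_add_of_degree_le (degree_le i p) le_rfl,
    lex.coeff_mul_of_add_of_degree_le le_rfl (degree_le i q),
    coeff_eulerDerivation, coeff_eulerDerivation] at hcoeff
  have hlead : lex.leadingCoeff p * lex.leadingCoeff q ≠ 0 :=
    mul_ne_zero (lex.leadingCoeff_ne_zero_iff.2 hp) (lex.leadingCoeff_ne_zero_iff.2 hq)
  have hcast : ((lex.degree p i : ℕ) : R) = (lex.degree q i : ℕ) :=
    mul_right_cancel₀ hlead (by simp only [leadingCoeff]; linear_combination hcoeff)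
  exact_mod_cast hcast

open MonomialOrder in
/-- Cancelling the leading monomial of `p` by a multiple of `q` would leave a polynomial with the
same logarithmic derivatives as `q`, hence with the leading monomial of `q`. -/
lemma exists_eq_C_mul_of_eulerDerivation_mul_eq [Field R] [CharZero R]
    {p q : MvPolynomial σ R} (hq : q ≠ 0)
    (h : ∀ i, eulerDerivation i p * q = p * eulerDerivation i q) : ∃ r : R, p = C r * q := by
  set d := lex.degree q
  have hd : coeff d q ≠ 0 := lex.leadingCoeff_ne_zero_iff.2 hq
  refine ⟨coeff d p / coeff d q, sub_eq_zero.1 (by_contra fun hne => ?_)⟩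
  have hdeg := lex_degree_eq_of_eulerDerivation_mul_eq hne hq fun i => by
    rw [← smul_eq_C_mul, map_sub, Derivation.map_smul, smul_eq_C_mul, smul_eq_C_mul]
    linear_combination h i
  refine lex.leadingCoeff_ne_zero_iff.2 hne ?_
  rw [leadingCoeff, hdeg, coeff_sub, coeff_C_mul, div_mul_cancel₀ _ hd, sub_self]

end EulerDerivation

section AlgHom

variable {σ R : Type*} [CommSemiring R]

lemma derivation_algHom_apply [Fintype σ] {S F : Type*} [CommSemiring S] [Algebra R S]
    [FunLike F (MvPolynomial σ R) S] [AlgHomClass F R (MvPolynomial σ R) S]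
    (D : Derivation R S S) (φ : F) (p : MvPolynomial σ R) :
    D (φ p) = ∑ i, φ (pderiv i p) * D (φ (X i)) := by
  classical
  induction p using MvPolynomial.induction_on with
  | C r =>
    simp only [← algebraMap_eq, AlgHomClass.commutes, Derivation.map_algebraMap, map_zero,
      zero_mul, Finset.sum_const_zero]
  | add p q hp hq => simp only [map_add, hp, hq, add_mul, Finset.sum_add_distrib]
  | mul_X p i hp =>
    simp only [map_mul, Derivation.leibniz, hp, pderiv_X, smul_eq_mul, map_add, add_mul,
      Finset.sum_add_distrib, Finset.mul_sum]
    congr 1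
    · simp [Pi.single_apply]
    · exact Finset.sum_congr rfl fun j _ => by ring

lemma aeval_map_X {S F : Type*} [CommSemiring S] [Algebra R S]
    [FunLike F (MvPolynomial σ R) S] [AlgHomClass F R (MvPolynomial σ R) S] (φ : F)
    (p : MvPolynomial σ R) : aeval (fun i => φ (X i)) p = φ p :=
  (DFunLike.congr_fun (aeval_unique (AlgHomClass.toAlgHom φ : MvPolynomial σ R →ₐ[R] S)) p).symm

lemma isWeightedHomogeneous_aeval {τ M : Type*} [AddCommMonoid M] {w : σ → M} {v : τ → M}
    {f : σ → MvPolynomial τ R} (hf : ∀ i, IsWeightedHomogeneous v (f i) (w i))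
    {p : MvPolynomial σ R} {D : M} (hp : IsWeightedHomogeneous w p D) :
    IsWeightedHomogeneous v (aeval f p) D := by
  rw [p.as_sum, map_sum]
  refine IsWeightedHomogeneous.sum _ _ _ fun d hd => ?_
  rw [aeval_monomial, algebraMap_eq]
  refine IsWeightedHomogeneous.C_mul ?_ _
  rw [← hp (mem_support_iff.1 hd), Finsupp.weight_apply]
  exact IsWeightedHomogeneous.prod _ _ _ fun i _ => (hf i).pow (d i)

variable [DecidableEq σ]

/-- The endomorphism `X i ↦ X i + F` fixing the other variables. -/
noncomputable def shearHom (i : σ) (F : MvPolynomial σ R) :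
    MvPolynomial σ R →ₐ[R] MvPolynomial σ R :=
  aeval (Function.update X i (X i + F))

lemma shearHom_X_self (i : σ) (F : MvPolynomial σ R) : shearHom i F (X i) = X i + F := by
  rw [shearHom, aeval_X, Function.update_self]

lemma shearHom_X_of_ne {i j : σ} (hj : j ≠ i) (F : MvPolynomial σ R) :
    shearHom i F (X j) = X j := by
  rw [shearHom, aeval_X, Function.update_of_ne hj]

lemma shearHom_eq_self {i : σ} (F : MvPolynomial σ R) {p : MvPolynomial σ R} (hp : i ∉ p.vars) :
    shearHom i F p = p := by
  conv_rhs => rw [← AlgHom.id_apply (R := R) p]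
  refine hom_congr_vars (f₁ := (shearHom i F : MvPolynomial σ R →+* MvPolynomial σ R))
    (f₂ := RingHom.id _) ?_ ?_ rfl
  · ext1 r
    exact (shearHom i F).commutes r
  · intro j hj _
    exact shearHom_X_of_ne (ne_of_mem_of_not_mem hj hp) F

lemma shearHom_comp_shearHom (i : σ) {F G : MvPolynomial σ R} (hG : i ∉ G.vars) (h : F + G = 0) :
    (shearHom i F).comp (shearHom i G) = AlgHom.id R (MvPolynomial σ R) := by
  refine algHom_ext fun j => ?_
  rcases eq_or_ne j i with rfl | hj
  · rw [AlgHom.comp_apply, shearHom_X_self, map_add, shearHom_X_self, shearHom_eq_self F hG,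
      add_assoc, h, add_zero, AlgHom.id_apply]
  · rw [AlgHom.comp_apply, shearHom_X_of_ne hj, shearHom_X_of_ne hj, AlgHom.id_apply]

end AlgHom

section Shear

variable {σ R : Type*} [CommRing R] [DecidableEq σ]

/-- The elementary automorphism `X i ↦ X i + F`, where `F` does not involve `X i`. -/
noncomputable def shear (i : σ) (F : MvPolynomial σ R) (hF : i ∉ F.vars) :
    MvPolynomial σ R ≃ₐ[R] MvPolynomial σ R :=
  AlgEquiv.ofAlgHom (shearHom i F) (shearHom i (-F))
    (shearHom_comp_shearHom i (by rwa [vars_neg]) (add_neg_cancel F))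
    (shearHom_comp_shearHom i hF (neg_add_cancel F))

lemma shear_X_self (i : σ) (F : MvPolynomial σ R) (hF : i ∉ F.vars) :
    shear i F hF (X i) = X i + F :=
  shearHom_X_self i F

lemma shear_X_of_ne {i j : σ} (hj : j ≠ i) (F : MvPolynomial σ R) (hF : i ∉ F.vars) :
    shear i F hF (X j) = X j :=
  shearHom_X_of_ne hj F

end Shear

section Graded

variable {R : Type*} [CommRing R] {w : Fin 3 → ℤ}

lemma isGraded_of_forall_X {φ : MvPolynomial (Fin 3) R ≃ₐ[R] MvPolynomial (Fin 3) R}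
    (h : ∀ i, IsWeightedHomogeneous w (φ (X i)) (w i)) : IsGraded w φ := fun D p hp => by
  rw [← aeval_map_X φ]
  exact isWeightedHomogeneous_aeval h hp

lemma isElementary_shear (i : Fin 3) (F : MvPolynomial (Fin 3) R) (hF : i ∉ F.vars) :
    IsElementary (shear i F hF) :=
  ⟨i, F, hF, shear_X_self i F hF, fun _ hj => shear_X_of_ne hj F hF⟩

lemma isGraded_shear {i : Fin 3} {F : MvPolynomial (Fin 3) R} (hF : i ∉ F.vars)
    (h : IsWeightedHomogeneous w F (w i)) : IsGraded w (shear i F hF) := by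
  refine isGraded_of_forall_X fun j => ?_
  rcases eq_or_ne j i with rfl | hj
  · rw [shear_X_self]
    exact (isWeightedHomogeneous_X R w j).add h
  · rw [shear_X_of_ne hj]
    exact isWeightedHomogeneous_X R w j

lemma isGraded_mul {φ ψ : MvPolynomial (Fin 3) R ≃ₐ[R] MvPolynomial (Fin 3) R}
    (hφ : IsGraded w φ) (hψ : IsGraded w ψ) : IsGraded w (φ * ψ) :=
  fun D p hp => hφ D _ (hψ D p hp)

lemma isGradedTame_of_mul_shear {φ : MvPolynomial (Fin 3) R ≃ₐ[R] MvPolynomial (Fin 3) R}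
    {i : Fin 3} {F : MvPolynomial (Fin 3) R} (hF : i ∉ F.vars)
    (hFw : IsWeightedHomogeneous w F (w i)) (h : IsGradedTame w (φ * shear i F hF)) :
    IsGradedTame w φ := by
  have hF' : i ∉ (-F).vars := by rwa [vars_neg]
  obtain ⟨l, hl, hprod⟩ := h
  refine ⟨l ++ [shear i (-F) hF'], fun ψ hψ => ?_, ?_⟩
  · rcases List.mem_append.1 hψ with hψ | hψ
    · exact hl ψ hψ
    · rw [List.mem_singleton.1 hψ]
      exact ⟨isGraded_shear hF' hFw.neg, Or.inl (isElementary_shear i _ hF')⟩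
  · rw [List.prod_append, List.prod_singleton, ← hprod, mul_assoc]
    refine (mul_one φ).symm.trans (congrArg (φ * ·) (AlgEquiv.ext fun p => ?_))
    exact ((shear i F hF).apply_symm_apply p).symm

lemma isGradedTame_of_isLinearAut {φ : MvPolynomial (Fin 3) R ≃ₐ[R] MvPolynomial (Fin 3) R}
    (hφ : IsGraded w φ) (hlin : IsLinearAut φ) : IsGradedTame w φ :=
  ⟨[φ], by simpa using ⟨hφ, Or.inr hlin⟩, (List.prod_singleton).symm⟩

end Graded

section XYDegree

/-- The weights of the degree in `x` and `y` alone. -/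
def xyWeight : Fin 3 → ℕ := ![1, 1, 0]

local notation "xyDegree" => weightedTotalDegree xyWeight

local notation "xyLeadingForm" => leadingForm xyWeight

lemma weight_fin_three {M : Type*} [AddCommMonoid M] (w : Fin 3 → M) (d : Fin 3 →₀ ℕ) :
    weight w d = d 0 • w 0 + d 1 • w 1 + d 2 • w 2 := by
  rw [Finsupp.weight_apply, Finsupp.sum_fintype _ _ fun i => zero_smul ℕ (w i), Fin.sum_univ_three]

section CommRing

variable {R : Type*} [CommRing R]

/-- The Jacobian `v ↦ ∂(u, v)/∂(x, y)`, as a derivation in `v`. -/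
noncomputable def xyJacobian (u : MvPolynomial (Fin 3) R) :
    Derivation R (MvPolynomial (Fin 3) R) (MvPolynomial (Fin 3) R) :=
  pderiv 0 u • pderiv 1 - pderiv 1 u • pderiv 0

lemma xyJacobian_apply (u v : MvPolynomial (Fin 3) R) :
    xyJacobian u v = pderiv 0 u * pderiv 1 v - pderiv 1 u * pderiv 0 v := rfl

lemma xyJacobian_comm (u v : MvPolynomial (Fin 3) R) : xyJacobian u v = -xyJacobian v u := by
  rw [xyJacobian_apply, xyJacobian_apply]
  ring

lemma xyJacobian_X_zero (p : MvPolynomial (Fin 3) R) : xyJacobian (X 0) p = pderiv 1 p := by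
  rw [xyJacobian_apply, pderiv_X_self, pderiv_X_of_ne (by decide), one_mul, zero_mul, sub_zero]

lemma X_mul_X_mul_xyJacobian (u v : MvPolynomial (Fin 3) R) :
    X 0 * X 1 * xyJacobian u v =
      eulerDerivation 0 u * eulerDerivation 1 v - eulerDerivation 1 u * eulerDerivation 0 v := by
  simp only [xyJacobian_apply, eulerDerivation_apply]
  ring

lemma weightedHomogeneousComponent_X_mul_X_mul_xyJacobian (w : Fin 3 → ℕ)
    (u v : MvPolynomial (Fin 3) R) :
    weightedHomogeneousComponent w (weightedTotalDegree w u + weightedTotalDegree w v)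
        (X 0 * X 1 * xyJacobian u v) =
      X 0 * X 1 * xyJacobian (leadingForm w u) (leadingForm w v) := by
  have component_mul (i j : Fin 3) := weightedHomogeneousComponent_add_mul
    (weightedTotalDegree_eulerDerivation_le w i u) (weightedTotalDegree_eulerDerivation_le w j v)
  simp only [X_mul_X_mul_xyJacobian, map_sub, component_mul,
    weightedHomogeneousComponent_eulerDerivation, leadingForm]

variable [IsDomain R]

lemma xyDegree_X_mul_X_mul {p : MvPolynomial (Fin 3) R} (hp : p ≠ 0) :
    xyDegree (X 0 * X 1 * p) = xyDegree p + 2 := by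
  have xyDegree_X (i : Fin 3) : xyDegree (X i : MvPolynomial (Fin 3) R) = xyWeight i :=
    weightedTotalDegree_eq_of_isWeightedHomogeneous (isWeightedHomogeneous_X R _ i) (X_ne_zero i)
  rw [weightedTotalDegree_mul (mul_ne_zero (X_ne_zero 0) (X_ne_zero 1)) hp,
    weightedTotalDegree_mul (X_ne_zero 0) (X_ne_zero 1), xyDegree_X, xyDegree_X]
  exact add_comm 2 _

lemma xyDegree_xyJacobian_add_two_le {u v : MvPolynomial (Fin 3) R} (h : xyJacobian u v ≠ 0) :
    xyDegree (xyJacobian u v) + 2 ≤ xyDegree u + xyDegree v := by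
  rw [← xyDegree_X_mul_X_mul h, X_mul_X_mul_xyJacobian]
  exact (weightedTotalDegree_sub_le _ _ _).trans (max_le
    (weightedTotalDegree_eulerDerivation_mul_le _ _ _ u v)
    (weightedTotalDegree_eulerDerivation_mul_le _ _ _ u v))

lemma xyJacobian_leadingForm_eq_zero {u v : MvPolynomial (Fin 3) R}
    (h : xyDegree (xyJacobian u v) + 2 < xyDegree u + xyDegree v) :
    xyJacobian (xyLeadingForm u) (xyLeadingForm v) = 0 := by
  have hXX : (X 0 * X 1 : MvPolynomial (Fin 3) R) ≠ 0 := mul_ne_zero (X_ne_zero 0) (X_ne_zero 1)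
  refine (mul_eq_zero.1 ?_).resolve_left hXX
  rw [← weightedHomogeneousComponent_X_mul_X_mul_xyJacobian]
  rcases eq_or_ne (xyJacobian u v) 0 with h0 | h0
  · rw [h0, mul_zero, map_zero]
  · exact weightedHomogeneousComponent_eq_zero _ _ (by rwa [xyDegree_X_mul_X_mul h0])

end CommRing

section Automorphism

lemma xyJacobian_map {R F : Type*} [CommRing R]
    [FunLike F (MvPolynomial (Fin 3) R) (MvPolynomial (Fin 3) R)]
    [AlgHomClass F R (MvPolynomial (Fin 3) R) (MvPolynomial (Fin 3) R)] (φ : F) {l : R}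
    (hφ : φ (X 2) = C l * X 2) (p q : MvPolynomial (Fin 3) R) :
    xyJacobian (φ p) (φ q) = φ (xyJacobian p q) * xyJacobian (φ (X 0)) (φ (X 1)) := by
  have pderiv_map {k : Fin 3} (hk : k ≠ 2) (r : MvPolynomial (Fin 3) R) :
      pderiv k (φ r) =
        φ (pderiv 0 r) * pderiv k (φ (X 0)) + φ (pderiv 1 r) * pderiv k (φ (X 1)) := by
    rw [derivation_algHom_apply, Fin.sum_univ_three, hφ, pderiv_C_mul, pderiv_X_of_ne hk.symm,
      mul_zero, mul_zero, add_zero]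
  rw [xyJacobian_apply (φ p), pderiv_map (k := 0) (by decide) p, pderiv_map (k := 1) (by decide) p,
    pderiv_map (k := 0) (by decide) q, pderiv_map (k := 1) (by decide) q, xyJacobian_apply,
    xyJacobian_apply, map_sub, map_mul, map_mul]
  ring

variable {K : Type*} [Field K] (φ : MvPolynomial (Fin 3) K ≃ₐ[K] MvPolynomial (Fin 3) K) {l : K}

lemma map_X_ne_zero (i : Fin 3) : φ (X i) ≠ 0 :=
  (map_ne_zero_iff φ φ.injective).2 (X_ne_zero i)

lemma isWeightedHomogeneous_map_X_two (hφ : φ (X 2) = C l * X 2) :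
    IsWeightedHomogeneous xyWeight (φ (X 2)) 0 :=
  hφ ▸ (isWeightedHomogeneous_X K xyWeight 2).C_mul l

lemma xyDegree_map_X_two (hφ : φ (X 2) = C l * X 2) : xyDegree (φ (X 2)) = 0 :=
  Nat.le_zero.1 (weightedTotalDegree_le_of_isWeightedHomogeneous
    (isWeightedHomogeneous_map_X_two φ hφ))

lemma xyLeadingForm_map_X_two (hφ : φ (X 2) = C l * X 2) : xyLeadingForm (φ (X 2)) = φ (X 2) := by
  rw [leadingForm, xyDegree_map_X_two φ hφ,
    weightedHomogeneousComponent_eq_self (isWeightedHomogeneous_map_X_two φ hφ)]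

lemma exists_xyJacobian_eq_C (hφ : φ (X 2) = C l * X 2) :
    ∃ r : K, r ≠ 0 ∧ xyJacobian (φ (X 0)) (φ (X 1)) = C r := by
  have hunit : IsUnit (xyJacobian (φ (X 0)) (φ (X 1))) := by
    have h := xyJacobian_map φ hφ (φ.symm (X 0)) (φ.symm (X 1))
    rw [φ.apply_symm_apply, φ.apply_symm_apply, xyJacobian_X_zero, pderiv_X_self] at h
    exact IsUnit.of_mul_eq_one_right _ h.symm
  obtain ⟨r, hr, h⟩ := isUnit_iff_eq_C_of_isReduced.1 hunit
  exact ⟨r, hr.ne_zero, h⟩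

lemma xyDegree_map_pderiv_one_add_two_le (hφ : φ (X 2) = C l * X 2) {Q : MvPolynomial (Fin 3) K}
    (hQ : pderiv 1 Q ≠ 0) :
    xyDegree (φ (pderiv 1 Q)) + 2 ≤ xyDegree (φ (X 0)) + xyDegree (φ Q) := by
  obtain ⟨r, hr, hJ⟩ := exists_xyJacobian_eq_C φ hφ
  have hmap : xyJacobian (φ (X 0)) (φ Q) = φ (pderiv 1 Q) * C r := by
    have h := xyJacobian_map φ hφ (X 0) Q
    rwa [xyJacobian_X_zero, hJ] at h
  have hC : (C r : MvPolynomial (Fin 3) K) ≠ 0 := by rwa [Ne, C_eq_zero]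
  have hφQ : φ (pderiv 1 Q) ≠ 0 := by rwa [Ne, map_eq_zero_iff φ φ.injective]
  have h := xyDegree_xyJacobian_add_two_le (hmap ▸ mul_ne_zero hφQ hC)
  rwa [hmap, weightedTotalDegree_mul hφQ hC, weightedTotalDegree_C, add_zero] at h

lemma xyDegree_map_eulerDerivation_one_le (hφ : φ (X 2) = C l * X 2) (Q : MvPolynomial (Fin 3) K) :
    xyDegree (φ (eulerDerivation 1 Q)) ≤
      xyDegree (φ Q) + (xyDegree (φ (X 0)) + xyDegree (φ (X 1)) - 2) := by
  rw [eulerDerivation_apply, map_mul]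
  rcases eq_or_ne (pderiv 1 Q) 0 with h0 | h0
  · simp only [h0, map_zero, mul_zero, weightedTotalDegree_zero, bot_le]
  · have hmul : xyDegree (φ (X 1) * φ (pderiv 1 Q)) ≤
        xyDegree (φ (X 1)) + xyDegree (φ (pderiv 1 Q)) := weightedTotalDegree_mul_le _ _
    have hpderiv := xyDegree_map_pderiv_one_add_two_le φ hφ h0
    lia

/-- `Q'` is the image of `Q` under the product of the operators `y ∂/∂y - j`; each of them kills
the monomials of degree `j` in `y` and raises the degree of the image under `φ` only slightly. -/
lemma exists_coeff_eq_prod_sub_mul (hφ : φ (X 2) = C l * X 2) (Q : MvPolynomial (Fin 3) K)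
    (s : Finset ℕ) :
    ∃ Q' : MvPolynomial (Fin 3) K,
      (∀ d, coeff d Q' = (∏ j ∈ s, ((d 1 : K) - j)) * coeff d Q) ∧
      xyDegree (φ Q') ≤
        xyDegree (φ Q) + s.card * (xyDegree (φ (X 0)) + xyDegree (φ (X 1)) - 2) := by
  induction s using Finset.induction_on with
  | empty =>
    exact ⟨Q, fun d => by rw [Finset.prod_empty, one_mul], Nat.le_add_right _ _⟩
  | insert j s hj ih =>
    obtain ⟨Q', hcoeff, hdeg⟩ := ih
    refine ⟨eulerDerivation 1 Q' - C (j : K) * Q', fun d => ?_, ?_⟩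
    · rw [coeff_sub, coeff_C_mul, coeff_eulerDerivation, hcoeff, Finset.prod_insert hj]
      ring
    · have hφC : φ (C (j : K) * Q') = C (j : K) * φ Q' := by
        rw [map_mul, ← algebraMap_eq, φ.commutes]
      have hE := xyDegree_map_eulerDerivation_one_le φ hφ Q'
      have hC := weightedTotalDegree_C_mul_le xyWeight (j : K) (φ Q')
      have hsub := weightedTotalDegree_sub_le xyWeight (φ (eulerDerivation 1 Q'))
        (C (j : K) * φ Q')
      rw [map_sub, hφC, Finset.card_insert_of_notMem hj]
      lia

end Automorphism

section Divisibility

lemma add_le_lcm {m n : ℕ} (hm : ¬ m ∣ n) (hn : ¬ n ∣ m) : m + n ≤ m.lcm n := by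
  have hpos : 0 < m.lcm n := Nat.lcm_pos (Nat.pos_of_ne_zero fun h => hn (h ▸ dvd_zero n))
    (Nat.pos_of_ne_zero fun h => hm (h ▸ dvd_zero m))
  have two_mul_le {k : ℕ} (hk : k ∣ m.lcm n) (hne : m.lcm n ≠ k) : 2 * k ≤ m.lcm n := by
    obtain ⟨c, hc⟩ := hk
    rcases c with _ | _ | c
    · lia
    · lia
    · rw [hc]
      nlinarith
  have hm' := two_mul_le (Nat.dvd_lcm_left m n) fun h => hn (h ▸ Nat.dvd_lcm_right m n)
  have hn' := two_mul_le (Nat.dvd_lcm_right m n) fun h => hm (h ▸ Nat.dvd_lcm_left m n)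
  lia

lemma one_add_div_mul_lt {m n i j : ℕ} (hm : ¬ m ∣ n) (hn : ¬ n ∣ m) (hij : 1 ≤ i * m + j * n) :
    1 + j / (m / m.gcd n) * (m + n - 2) < i * m + j * n := by
  have hm2 : 2 ≤ m := (Nat.two_le_iff m).2
    ⟨fun h => hn (h ▸ dvd_zero n), fun h => hm (h ▸ one_dvd n)⟩
  have hn2 : 2 ≤ n := (Nat.two_le_iff n).2
    ⟨fun h => hm (h ▸ dvd_zero m), fun h => hn (h ▸ one_dvd m)⟩
  set t := j / (m / m.gcd n) with ht
  have hlcm : m.lcm n * t ≤ j * n := by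
    rw [Nat.lcm, mul_comm m, Nat.mul_div_assoc _ (Nat.gcd_dvd_left m n), mul_assoc, mul_comm j, ht]
    exact Nat.mul_le_mul_left _ (Nat.mul_div_le _ _)
  have hsum : (m + n - 2) * t + 2 * t ≤ j * n := by
    rw [← Nat.add_mul, Nat.sub_add_cancel (by lia)]
    exact (Nat.mul_le_mul_right t (add_le_lcm hm hn)).trans hlcm
  have htwo : 2 ≤ i * m + j * n := by
    rcases Nat.eq_zero_or_pos i with rfl | hi
    · rcases Nat.eq_zero_or_pos j with rfl | hj
      · simp at hij
      · nlinarith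
    · nlinarith
  rw [mul_comm t]
  rcases Nat.eq_zero_or_pos t with h | h
  · rw [h]
    lia
  · lia

lemma exists_finset_of_modEq (k : ℕ) {p : ℕ} (hp : 0 < p) :
    ∃ s : Finset ℕ, s.card ≤ k / p ∧ ∀ j, j ∈ s ↔ j < k ∧ p ∣ k - j := by
  refine ⟨(Finset.Icc 1 (k / p)).image (k - p * ·), ?_, fun j => ?_⟩
  · exact Finset.card_image_le.trans_eq (Nat.card_Icc 1 _)
  · simp only [Finset.mem_image, Finset.mem_Icc, Nat.le_div_iff_mul_le hp]
    constructor
    · rintro ⟨i, ⟨hi, hik⟩, rfl⟩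
      have hpi : 0 < p * i := Nat.mul_pos hp hi
      rw [mul_comm] at hik
      exact ⟨by lia, by rw [Nat.sub_sub_self hik]; exact dvd_mul_right p i⟩
    · rintro ⟨hjk, i, hi⟩
      refine ⟨i, ⟨Nat.pos_of_ne_zero ?_, ?_⟩, ?_⟩
      · rintro rfl
        lia
      · lia
      · lia

lemma aeval_mul_eq_aeval_mul {R S : Type*} [CommSemiring R] [CommSemiring S] [Algebra R S]
    {p : MvPolynomial (Fin 3) R} {i j : ℕ} (hp : ∀ d ∈ p.support, d 0 = i ∧ d 1 = j)
    {f g : Fin 3 → S} (h : f 2 = g 2) :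
    aeval f p * (g 0 ^ i * g 1 ^ j) = aeval g p * (f 0 ^ i * f 1 ^ j) := by
  simp only [aeval_def, eval₂_eq', Fin.prod_univ_three, Finset.sum_mul]
  refine Finset.sum_congr rfl fun d hd => ?_
  rw [(hp d hd).1, (hp d hd).2, h]
  ring

variable {n : Fin 3 → ℕ} {d e : Fin 3 →₀ ℕ}

lemma div_gcd_dvd_sub_of_weight_eq (h0 : 0 < n 0) (h2 : n 2 = 0)
    (hw : weight n d = weight n e) : n 0 / (n 0).gcd (n 1) ∣ e 1 - d 1 := by
  refine Nat.Coprime.dvd_of_dvd_mul_right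
    (Nat.coprime_div_gcd_div_gcd (Nat.gcd_pos_of_pos_left _ h0))
    (Nat.dvd_of_mul_dvd_mul_right (Nat.gcd_pos_of_pos_left (n 1) h0) ?_)
  rw [Nat.div_mul_cancel (Nat.gcd_dvd_left _ _), mul_assoc,
    Nat.div_mul_cancel (Nat.gcd_dvd_right _ _)]
  simp only [weight_fin_three, h2, smul_eq_mul, mul_zero, add_zero] at hw
  refine ⟨d 0 - e 0, ?_⟩
  rw [Nat.sub_mul, Nat.mul_sub, mul_comm (n 0), mul_comm (n 0)]
  lia

lemma apply_zero_eq_of_weight_eq (h0 : 0 < n 0) (h2 : n 2 = 0)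
    (hw : weight n d = weight n e) (h1 : d 1 = e 1) : d 0 = e 0 := by
  simp only [weight_fin_three, h2, smul_eq_mul, mul_zero, add_zero, h1] at hw
  exact Nat.eq_of_mul_eq_mul_right h0 (Nat.add_right_cancel hw)

variable {K : Type*} [Field K] {φ : MvPolynomial (Fin 3) K ≃ₐ[K] MvPolynomial (Fin 3) K} {l : K}

lemma le_xyDegree_map (hφ : φ (X 2) = C l * X 2) (hn : ∀ i, xyDegree (φ (X i)) = n i)
    {Q : MvPolynomial (Fin 3) K} (he : e ∈ Q.support)
    (hw : weightedTotalDegree n Q ≤ weight n e)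
    (hiso : ∀ d ∈ Q.support, weight n d = weight n e → d 0 = e 0 ∧ d 1 = e 1) :
    weight n e ≤ xyDegree (φ Q) := by
  set T := weightedHomogeneousComponent n (weight n e) Q with hT
  have hT0 : T ≠ 0 := ne_zero_iff.2 ⟨e, by
    rwa [hT, coeff_weightedHomogeneousComponent, if_pos rfl, ← mem_support_iff]⟩
  have hTsupp : ∀ d ∈ T.support, d 0 = e 0 ∧ d 1 = e 1 := fun d hd => by
    rw [mem_support_iff, hT, coeff_weightedHomogeneousComponent, ite_ne_right_iff] at hd
    exact hiso d (mem_support_iff.2 hd.2) hd.1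
  have hcomponent : weightedHomogeneousComponent xyWeight (weight n e) (φ Q) =
      aeval (fun i => xyLeadingForm (φ (X i))) T := by
    rw [← aeval_map_X φ, weightedHomogeneousComponent_aeval (fun i => (hn i).le) hw]
    simp only [leadingForm, hn, hT]
  have hmul : aeval (fun i => xyLeadingForm (φ (X i))) T * (φ (X 0) ^ e 0 * φ (X 1) ^ e 1) =
      φ T * (xyLeadingForm (φ (X 0)) ^ e 0 * xyLeadingForm (φ (X 1)) ^ e 1) := by
    rw [← aeval_map_X φ T]
    exact aeval_mul_eq_aeval_mul (f := fun i => xyLeadingForm (φ (X i)))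
      (g := fun i => φ (X i)) hTsupp (xyLeadingForm_map_X_two φ hφ)
  rw [← hcomponent] at hmul
  refine le_weightedTotalDegree_of_component_ne_zero (left_ne_zero_of_mul (ne_of_eq_of_ne hmul ?_))
  exact mul_ne_zero ((map_ne_zero_iff φ φ.injective).2 hT0) (mul_ne_zero
    (pow_ne_zero _ (leadingForm_ne_zero (map_X_ne_zero φ 0)))
    (pow_ne_zero _ (leadingForm_ne_zero (map_X_ne_zero φ 1))))

variable [CharZero K]

/-- The degree in `y` of the monomials of weight `N` is constant modulo `n₀ / gcd(n₀, n₁)`, so few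
factors `y ∂/∂y - j` suffice to kill all of them but the ones with the exponents of `e`. -/
lemma exists_xyDegree_le_of_isolate (hφ : φ (X 2) = C l * X 2) (h0 : 0 < n 0) (h2 : n 2 = 0)
    {Q : MvPolynomial (Fin 3) K} (he : e ∈ Q.support)
    (hmax : ∀ d ∈ Q.support, weight n d = weight n e → d 1 ≤ e 1) :
    ∃ Q' : MvPolynomial (Fin 3) K, Q'.support ⊆ Q.support ∧ e ∈ Q'.support ∧
      (∀ d ∈ Q'.support, weight n d = weight n e → d 0 = e 0 ∧ d 1 = e 1) ∧
      xyDegree (φ Q') ≤ xyDegree (φ Q) + e 1 / (n 0 / (n 0).gcd (n 1)) *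
        (xyDegree (φ (X 0)) + xyDegree (φ (X 1)) - 2) := by
  have hp : 0 < n 0 / (n 0).gcd (n 1) :=
    Nat.div_pos (Nat.gcd_le_left _ h0) (Nat.gcd_pos_of_pos_left _ h0)
  obtain ⟨s, hs, hmem⟩ := exists_finset_of_modEq (e 1) hp
  obtain ⟨Q', hcoeff, hdeg⟩ := exists_coeff_eq_prod_sub_mul φ hφ Q s
  have mem_support {d} : d ∈ Q'.support ↔ d 1 ∉ s ∧ d ∈ Q.support := by
    rw [mem_support_iff, mem_support_iff, hcoeff, mul_ne_zero_iff, Finset.prod_ne_zero_iff]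
    simp only [sub_ne_zero, ne_eq, Nat.cast_inj]
    exact and_congr_left' ⟨fun h hd => h _ hd rfl, fun h j hj hd => h (hd ▸ hj)⟩
  refine ⟨Q', fun d hd => (mem_support.1 hd).2, mem_support.2 ⟨?_, he⟩, fun d hd hw => ?_, ?_⟩
  · exact fun h => lt_irrefl _ ((hmem _).1 h).1
  · have hdvd := div_gcd_dvd_sub_of_weight_eq h0 h2 hw
    have hle := hmax d (mem_support.1 hd).2 hw
    have hnot : ¬ d 1 < e 1 := fun h => (mem_support.1 hd).1 ((hmem _).2 ⟨h, hdvd⟩)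
    have h1 : d 1 = e 1 := hle.antisymm (not_lt.1 hnot)
    exact ⟨apply_zero_eq_of_weight_eq h0 h2 hw h1, h1⟩
  · exact hdeg.trans (Nat.add_le_add_left (Nat.mul_le_mul_right _ hs) _)

lemma exists_weight_eq_weightedTotalDegree_max {R : Type*} [CommSemiring R] (n : Fin 3 → ℕ)
    {Q : MvPolynomial (Fin 3) R} (hQ : Q ≠ 0) :
    ∃ e ∈ Q.support, weightedTotalDegree n Q = weight n e ∧
      ∀ d ∈ Q.support, weight n d = weight n e → d 1 ≤ e 1 := by
  classical
  obtain ⟨e₀, he₀, hw₀⟩ :=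
    Finset.exists_mem_eq_sup Q.support (support_nonempty.2 hQ) (weight n)
  obtain ⟨e, he, hmax⟩ := Finset.exists_max_image
    (Q.support.filter fun d => weight n d = weightedTotalDegree n Q) (fun d => d 1)
    ⟨e₀, Finset.mem_filter.2 ⟨he₀, hw₀.symm⟩⟩
  rw [Finset.mem_filter] at he
  exact ⟨e, he.1, he.2.symm, fun d hd hw =>
    hmax d (Finset.mem_filter.2 ⟨hd, hw.trans he.2⟩)⟩

lemma xyDegree_dvd_or_dvd (hφ : φ (X 2) = C l * X 2) :
    xyDegree (φ (X 0)) ∣ xyDegree (φ (X 1)) ∨ xyDegree (φ (X 1)) ∣ xyDegree (φ (X 0)) := by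
  by_contra! hndvd
  obtain ⟨n, hn⟩ : ∃ n : Fin 3 → ℕ, ∀ i, xyDegree (φ (X i)) = n i := ⟨_, fun _ => rfl⟩
  rw [hn, hn] at hndvd
  have h0 : 0 < n 0 := Nat.pos_of_ne_zero fun h => hndvd.2 (h ▸ dvd_zero _)
  have h2 : n 2 = 0 := (hn 2).symm.trans (xyDegree_map_X_two φ hφ)
  set Q := φ.symm (X 0)
  have hφQ : φ Q = X 0 := φ.apply_symm_apply _
  have hφQ1 : xyDegree (φ Q) = 1 := by
    rw [hφQ]
    exact weightedTotalDegree_eq_of_isWeightedHomogeneous (isWeightedHomogeneous_X K _ 0)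
      (X_ne_zero 0)
  have hQ : Q ≠ 0 := (map_ne_zero_iff φ φ.injective).1 (hφQ ▸ X_ne_zero 0)
  obtain ⟨e, he, hwe, hmax⟩ := exists_weight_eq_weightedTotalDegree_max n hQ
  obtain ⟨Q', hsub, he', hiso, hdeg⟩ := exists_xyDegree_le_of_isolate hφ h0 h2 he hmax
  have hone : 1 ≤ weight n e := by
    rw [← hwe, ← hφQ1, ← aeval_map_X φ]
    exact weightedTotalDegree_aeval_le (fun i => (hn i).le) Q
  have hle := (le_xyDegree_map hφ hn he' ((Finset.sup_mono hsub).trans_eq hwe) hiso).trans hdeg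
  rw [hφQ1, hn, hn] at hle
  simp only [weight_fin_three, h2, smul_eq_mul, mul_zero, add_zero] at hone hle
  exact hle.not_gt (one_add_div_mul_lt hndvd.1 hndvd.2 hone)

end Divisibility

section Lowering

lemma isWeightedHomogeneous_weightedHomogeneousComponent {σ M N R : Type*} [CommSemiring R]
    [AddCommMonoid M] [AddCommMonoid N] {w : σ → M} {D : M} {p : MvPolynomial σ R}
    (hp : IsWeightedHomogeneous w p D) (v : σ → N) (n : N) :
    IsWeightedHomogeneous w (weightedHomogeneousComponent v n p) D := fun d hd => by
  classical
  rw [coeff_weightedHomogeneousComponent, ite_ne_right_iff] at hd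
  exact hp hd.2

variable {K : Type*} [Field K] [CharZero K] {w : Fin 3 → ℤ} {D : ℤ}

lemma eulerDerivation_mul_eq_of_xyJacobian_eq_zero {n : ℕ} {p q : MvPolynomial (Fin 3) K}
    (hw : w 2 ≠ 0) (hn : n ≠ 0) (hpw : IsWeightedHomogeneous w p D)
    (hqw : IsWeightedHomogeneous w q D) (hpn : IsWeightedHomogeneous xyWeight p n)
    (hqn : IsWeightedHomogeneous xyWeight q n) (h : xyJacobian p q = 0) (i : Fin 3) :
    eulerDerivation i p * q = p * eulerDerivation i q := by
  have euler_xy {r : MvPolynomial (Fin 3) K} (hr : IsWeightedHomogeneous xyWeight r n) :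
      eulerDerivation 0 r + eulerDerivation 1 r = C (n : K) * r := by
    simpa [xyWeight, Fin.sum_univ_three] using
      sum_C_mul_eulerDerivation (Nat.castAddMonoidHom K) hr
  have euler_w {r : MvPolynomial (Fin 3) K} (hr : IsWeightedHomogeneous w r D) :
      C (w 0 : K) * eulerDerivation 0 r + C (w 1 : K) * eulerDerivation 1 r +
        C (w 2 : K) * eulerDerivation 2 r = C (D : K) * r := by
    simpa [Fin.sum_univ_three] using sum_C_mul_eulerDerivation (Int.castAddHom K) hr
  have hJ : eulerDerivation 0 p * eulerDerivation 1 q =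
      eulerDerivation 1 p * eulerDerivation 0 q := by
    rw [← sub_eq_zero, ← X_mul_X_mul_xyJacobian, h, mul_zero]
  have hnC : (C (n : K) : MvPolynomial (Fin 3) K) ≠ 0 := by simpa using hn
  have hwC : (C (w 2 : K) : MvPolynomial (Fin 3) K) ≠ 0 := by simpa using hw
  have h0 : eulerDerivation 0 p * q = p * eulerDerivation 0 q := mul_left_cancel₀ hnC <| by
    linear_combination
      hJ - eulerDerivation 0 p * euler_xy hqn + eulerDerivation 0 q * euler_xy hpn
  have h1 : eulerDerivation 1 p * q = p * eulerDerivation 1 q := mul_left_cancel₀ hnC <| by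
    linear_combination
      -hJ - eulerDerivation 1 p * euler_xy hqn + eulerDerivation 1 q * euler_xy hpn
  have h2 : eulerDerivation 2 p * q = p * eulerDerivation 2 q := mul_left_cancel₀ hwC <| by
    linear_combination
      q * euler_w hpw - p * euler_w hqw - C (w 0 : K) * h0 - C (w 1 : K) * h1
  match i with
  | 0 => exact h0
  | 1 => exact h1
  | 2 => exact h2

lemma exists_xyDegree_sub_C_mul_lt {p q : MvPolynomial (Fin 3) K} (hw : w 2 ≠ 0)
    (hpw : IsWeightedHomogeneous w p D) (hqw : IsWeightedHomogeneous w q D) (hq : q ≠ 0)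
    (hpos : 0 < xyDegree p) (hpq : xyDegree p = xyDegree q)
    (h : xyJacobian (xyLeadingForm p) (xyLeadingForm q) = 0) :
    ∃ r : K, xyDegree (p - C r * q) < xyDegree p := by
  obtain ⟨r, hr⟩ := exists_eq_C_mul_of_eulerDerivation_mul_eq (leadingForm_ne_zero hq)
    (eulerDerivation_mul_eq_of_xyJacobian_eq_zero hw hpos.ne'
      (isWeightedHomogeneous_weightedHomogeneousComponent hpw _ _)
      (isWeightedHomogeneous_weightedHomogeneousComponent hqw _ _)
      (isWeightedHomogeneous_leadingForm p) (hpq ▸ isWeightedHomogeneous_leadingForm q) h)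
  refine ⟨r, weightedTotalDegree_lt_of_component_eq_zero hpos ?_ ?_⟩
  · exact (weightedTotalDegree_sub_le _ _ _).trans
      (max_le le_rfl ((weightedTotalDegree_C_mul_le _ _ _).trans hpq.ge))
  · simp only [leadingForm, ← hpq] at hr
    rw [map_sub, weightedHomogeneousComponent_C_mul, hr, sub_self]

end Lowering

section Reduction

variable {K : Type*} [Field K] {φ : MvPolynomial (Fin 3) K ≃ₐ[K] MvPolynomial (Fin 3) K}
  {w : Fin 3 → ℤ} {i j : Fin 3} {q s : ℕ}

lemma notMem_vars_C_mul_X_pow_mul_X_pow {σ : Type*} {i j k : σ} (hj : j ≠ i) (hk : k ≠ i) (r : K)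
    (q s : ℕ) : i ∉ (C r * (X j ^ q * X k ^ s) : MvPolynomial σ K).vars := by
  have hmem : C r * (X j ^ q * X k ^ s) ∈ supported K {i}ᶜ :=
    mul_mem (Subalgebra.algebraMap_mem _ r)
      (mul_mem (pow_mem (X_mem_supported.2 hj) q) (pow_mem (X_mem_supported.2 hk) s))
  exact fun hi => mem_supported.1 hmem hi rfl

lemma isWeightedHomogeneous_X_pow_mul_X_pow (hw : w i = q * w j + s * w 2) :
    IsWeightedHomogeneous w (X j ^ q * X 2 ^ s : MvPolynomial (Fin 3) K) (w i) := by
  rw [hw, ← nsmul_eq_mul, ← nsmul_eq_mul]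
  exact ((isWeightedHomogeneous_X K w j).pow q).mul ((isWeightedHomogeneous_X K w 2).pow s)

lemma exists_isGraded_map_X_eq_sub (hφ : IsGraded w φ) (hj : j ≠ i) (hi : 2 ≠ i)
    (hw : w i = q * w j + s * w 2) (r : K) :
    ∃ ψ : MvPolynomial (Fin 3) K ≃ₐ[K] MvPolynomial (Fin 3) K, IsGraded w ψ ∧
      ψ (X i) = φ (X i) - C r * φ (X j ^ q * X 2 ^ s) ∧ (∀ k ≠ i, ψ (X k) = φ (X k)) ∧
      (IsGradedTame w ψ → IsGradedTame w φ) := by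
  have hF := notMem_vars_C_mul_X_pow_mul_X_pow hj hi (-r) q s
  have hFw := (isWeightedHomogeneous_X_pow_mul_X_pow (K := K) hw).C_mul (-r)
  refine ⟨φ * shear i _ hF, isGraded_mul hφ (isGraded_shear hF hFw), ?_, fun k hk => ?_,
    isGradedTame_of_mul_shear hF hFw⟩
  · rw [AlgEquiv.mul_apply, shear_X_self, map_add, map_mul, ← algebraMap_eq, φ.commutes,
      map_neg, neg_mul, sub_eq_add_neg]
  · rw [AlgEquiv.mul_apply, shear_X_of_ne hk]

lemma xyJacobian_leadingForm_map_eq_zero {l : K} (hl : φ (X 2) = C l * X 2)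
    (h : 2 < xyDegree (φ (X 0)) + xyDegree (φ (X 1))) (hj : j ≠ i) (hi2 : 2 ≠ i) (hj2 : 2 ≠ j) :
    xyJacobian (xyLeadingForm (φ (X i))) (xyLeadingForm (φ (X j))) = 0 := by
  have h01 : xyJacobian (xyLeadingForm (φ (X 0))) (xyLeadingForm (φ (X 1))) = 0 := by
    obtain ⟨r, -, hr⟩ := exists_xyJacobian_eq_C φ hl
    refine xyJacobian_leadingForm_eq_zero ?_
    rwa [hr, weightedTotalDegree_C, zero_add]
  have hij : i = 0 ∧ j = 1 ∨ i = 1 ∧ j = 0 := by lia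
  rcases hij with ⟨rfl, rfl⟩ | ⟨rfl, rfl⟩
  · exact h01
  · rw [xyJacobian_comm, h01, neg_zero]

lemma exists_isGraded_sum_xyDegree_lt [CharZero K] {l : K} (hφ : IsGraded w φ)
    (hl : φ (X 2) = C l * X 2) (hw2 : w 2 ≠ 0) (hj : j ≠ i) (hi2 : 2 ≠ i) (hj2 : 2 ≠ j)
    (hw : w i = q * w j + s * w 2) (hdeg : xyDegree (φ (X i)) = q * xyDegree (φ (X j)))
    (hpos : 0 < xyDegree (φ (X i))) (h : 2 < xyDegree (φ (X 0)) + xyDegree (φ (X 1))) :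
    ∃ ψ : MvPolynomial (Fin 3) K ≃ₐ[K] MvPolynomial (Fin 3) K, IsGraded w ψ ∧
      ∑ k, xyDegree (ψ (X k)) < ∑ k, xyDegree (φ (X k)) ∧
      (IsGradedTame w ψ → IsGradedTame w φ) := by
  have hu0 : (X j ^ q * X 2 ^ s : MvPolynomial (Fin 3) K) ≠ 0 :=
    mul_ne_zero (pow_ne_zero _ (X_ne_zero _)) (pow_ne_zero _ (X_ne_zero _))
  have hudeg : xyDegree (φ (X i)) = xyDegree (φ (X j ^ q * X 2 ^ s)) := by
    rw [map_mul, map_pow, map_pow, weightedTotalDegree_mul (pow_ne_zero _ (map_X_ne_zero φ j))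
      (pow_ne_zero _ (map_X_ne_zero φ 2)), weightedTotalDegree_pow, weightedTotalDegree_pow,
      xyDegree_map_X_two φ hl, mul_zero, add_zero, hdeg]
  have hJ : xyJacobian (xyLeadingForm (φ (X i))) (xyLeadingForm (φ (X j ^ q * X 2 ^ s))) = 0 := by
    have hJ2 : xyJacobian (xyLeadingForm (φ (X i))) (φ (X 2)) = 0 := by
      rw [hl, xyJacobian_apply, pderiv_C_mul, pderiv_C_mul, pderiv_X_of_ne (by decide),
        pderiv_X_of_ne (by decide)]
      simp only [mul_zero, sub_zero]
    rw [map_mul, map_pow, map_pow, leadingForm_mul, leadingForm_pow, leadingForm_pow,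
      xyLeadingForm_map_X_two φ hl, Derivation.leibniz, Derivation.leibniz_pow,
      Derivation.leibniz_pow, hJ2, xyJacobian_leadingForm_map_eq_zero hl h hj hi2 hj2]
    simp only [smul_zero, add_zero]
  obtain ⟨r, hr⟩ := exists_xyDegree_sub_C_mul_lt hw2 (hφ _ _ (isWeightedHomogeneous_X K w i))
    (hφ _ _ (isWeightedHomogeneous_X_pow_mul_X_pow hw))
    ((map_ne_zero_iff φ φ.injective).2 hu0) hpos hudeg hJ
  obtain ⟨ψ, hψ, hψi, hψk, htame⟩ := exists_isGraded_map_X_eq_sub hφ hj hi2 hw r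
  refine ⟨ψ, hψ, Finset.sum_lt_sum (fun k _ => ?_) ⟨i, Finset.mem_univ i, hψi ▸ hr⟩, htame⟩
  rcases eq_or_ne k i with rfl | hk
  · exact (hψi ▸ hr).le
  · rw [hψk k hk]

end Reduction

section Grading

variable {K : Type*} [Field K] {φ : MvPolynomial (Fin 3) K ≃ₐ[K] MvPolynomial (Fin 3) K}
  {w : Fin 3 → ℤ}

lemma exists_map_X_two_eq (hφ : IsGraded w φ) (h0 : 0 ≤ w 0) (h1 : 0 ≤ w 1) (h2 : w 2 < 0) :
    ∃ l : K, φ (X 2) = C l * X 2 := by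
  have hdvd : X 2 ∣ φ (X 2) := by
    rw [(φ (X 2)).as_sum]
    refine Finset.dvd_sum fun d hd => X_dvd_monomial.2 (Or.inr fun hd2 => ?_)
    have hwd := hφ _ _ (isWeightedHomogeneous_X K w 2) (mem_support_iff.1 hd)
    rw [weight_fin_three, hd2, zero_smul, add_zero] at hwd
    exact h2.not_ge (hwd ▸ add_nonneg (nsmul_nonneg h0 _) (nsmul_nonneg h1 _))
  obtain ⟨p, hp⟩ := hdvd
  have hirr : Irreducible (φ (X 2)) := (MulEquiv.irreducible_iff φ).2 X_prime.irreducible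
  have hunit : IsUnit p := (hirr.isUnit_or_isUnit hp).resolve_left X_prime.not_isUnit
  obtain ⟨l, -, rfl⟩ := isUnit_iff_eq_C_of_isReduced.1 hunit
  exact ⟨l, hp.trans (mul_comm _ _)⟩

lemma add_pos_of_isWeightedHomogeneous {R : Type*} [CommSemiring R] {D : ℤ}
    {p : MvPolynomial (Fin 3) R} (h2 : w 2 < 0) (hD : 0 < D) (hp : IsWeightedHomogeneous w p D)
    {d : Fin 3 →₀ ℕ} (hd : d ∈ p.support) : 0 < d 0 + d 1 := by
  by_contra! h
  have hw := hp (mem_support_iff.1 hd)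
  rw [weight_fin_three, show d 0 = 0 by lia, show d 1 = 0 by lia, zero_smul, zero_smul, zero_add,
    zero_add] at hw
  exact hD.not_ge (hw ▸ nsmul_nonpos h2.le _)

lemma weight_xyWeight (d : Fin 3 →₀ ℕ) : weight xyWeight d = d 0 + d 1 := by
  simp [weight_fin_three, xyWeight]

lemma xyDegree_pos {R : Type*} [CommSemiring R] {D : ℤ} {p : MvPolynomial (Fin 3) R}
    (h2 : w 2 < 0) (hD : 0 < D) (hp : IsWeightedHomogeneous w p D) (h0 : p ≠ 0) :
    0 < xyDegree p := by
  obtain ⟨d, hd⟩ := support_nonempty.2 h0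
  exact (add_pos_of_isWeightedHomogeneous h2 hD hp hd).trans_le
    ((weight_xyWeight d).symm.trans_le (le_weightedTotalDegree xyWeight hd))

lemma xyDegree_modEq_one {R : Type*} [CommSemiring R] {D : ℤ} {p : MvPolynomial (Fin 3) R}
    (hco : IsCoprime (w 1) (w 2)) (h01 : w 0 ≡ w 1 [ZMOD w 2]) (hD : D ≡ w 1 [ZMOD w 2])
    (hp : IsWeightedHomogeneous w p D) (h0 : p ≠ 0) : (xyDegree p : ℤ) ≡ 1 [ZMOD w 2] := by
  obtain ⟨d, hd, hdeg, -⟩ := exists_weight_eq_weightedTotalDegree_max xyWeight h0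
  have hw : d 0 * w 0 + d 1 * w 1 + d 2 * w 2 = D := by
    simpa [weight_fin_three] using hp (mem_support_iff.1 hd)
  rw [hdeg, weight_xyWeight, Int.modEq_iff_dvd]
  refine hco.symm.dvd_of_dvd_mul_left ?_
  have hdvd := (hD.symm.dvd.add (h01.dvd.mul_left (d 0))).sub (dvd_mul_left (w 2) (d 2 : ℤ))
  rw [← dvd_neg]
  convert hdvd using 1
  push_cast
  linear_combination hw

section DegreeOne

variable {R : Type*} [CommSemiring R] {k : ℕ} {p : MvPolynomial (Fin 3) R}

lemma apply_eq_of_xyDegree_le_one {m : ℕ} (hw1 : 0 < w 1) (hw2 : w 2 < 0)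
    (hw0 : w 0 = w 1 - k * w 2) (hp : IsWeightedHomogeneous w p (w 1 - m * w 2))
    (hdeg : xyDegree p ≤ 1) {d : Fin 3 →₀ ℕ} (hd : d ∈ p.support) :
    d 0 + d 1 = 1 ∧ d 2 + m = d 0 * k := by
  have hle := (le_weightedTotalDegree xyWeight hd).trans hdeg
  have hsum : d 0 + d 1 = 1 := by
    have hpos := add_pos_of_isWeightedHomogeneous hw2 (by nlinarith) hp hd
    rw [weight_xyWeight] at hle
    lia
  refine ⟨hsum, ?_⟩
  have hw : d 0 * w 0 + d 1 * w 1 + d 2 * w 2 = w 1 - m * w 2 := by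
    simpa [weight_fin_three] using hp (mem_support_iff.1 hd)
  have hcast : ((d 0 : ℤ) + d 1) = 1 := by exact_mod_cast hsum
  have h : ((d 2 : ℤ) + m) = d 0 * k := mul_right_cancel₀ hw2.ne <| by
    linear_combination hw - d 0 * hw0 - w 1 * hcast
  exact_mod_cast h

lemma eq_sum_monomial_of_support_subset {σ : Type*} {p : MvPolynomial σ R} {s : Finset (σ →₀ ℕ)}
    (hs : p.support ⊆ s) : p = ∑ d ∈ s, monomial d (coeff d p) :=
  p.as_sum.trans <| Finset.sum_subset hs fun d _ hd => by rw [notMem_support_iff.1 hd, map_zero]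

lemma exists_eq_C_mul_X_zero (hw1 : 0 < w 1) (hw2 : w 2 < 0) (hw0 : w 0 = w 1 - k * w 2)
    (hk : 0 < k) (hp : IsWeightedHomogeneous w p (w 0)) (hdeg : xyDegree p ≤ 1) :
    ∃ r : R, p = C r * X 0 := by
  have hsub : p.support ⊆ {Finsupp.single 0 1} := fun d hd => by
    obtain ⟨h01, h2⟩ := apply_eq_of_xyDegree_le_one hw1 hw2 hw0 (hw0 ▸ hp) hdeg hd
    have hd0 : d 0 = 1 := by
      have hd0 : d 0 ≠ 0 := fun h => by simp [h, hk.ne'] at h2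
      lia
    rw [hd0] at h2
    rw [Finset.mem_singleton]
    ext i
    fin_cases i <;> grind
  refine ⟨coeff (Finsupp.single 0 1) p, ?_⟩
  conv_lhs => rw [eq_sum_monomial_of_support_subset hsub, Finset.sum_singleton]
  rw [C_mul_X_eq_monomial]

lemma exists_eq_C_mul_X_one_add (hw1 : 0 < w 1) (hw2 : w 2 < 0) (hw0 : w 0 = w 1 - k * w 2)
    (hp : IsWeightedHomogeneous w p (w 1)) (hdeg : xyDegree p ≤ 1) :
    ∃ r t : R, p = C r * X 1 + C t * (X 0 * X 2 ^ k) := by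
  classical
  have hp' : IsWeightedHomogeneous w p (w 1 - (0 : ℕ) * w 2) := by simpa using hp
  have hsub : p.support ⊆ {Finsupp.single 1 1, Finsupp.single 0 1 + Finsupp.single 2 k} :=
    fun d hd => by
    obtain ⟨h01, h2⟩ := apply_eq_of_xyDegree_le_one hw1 hw2 hw0 hp' hdeg hd
    rw [Finset.mem_insert, Finset.mem_singleton]
    have hd0 : d 0 = 0 ∨ d 0 = 1 := by lia
    refine hd0.imp (fun h => ?_) (fun h => ?_)
    all_goals
      rw [h] at h01 h2
      ext i
      fin_cases i <;> grind [Finsupp.add_apply]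
  have hne : (Finsupp.single 1 1 : Fin 3 →₀ ℕ) ≠ Finsupp.single 0 1 + Finsupp.single 2 k :=
    fun h => by simpa using DFunLike.congr_fun h 0
  refine ⟨coeff (Finsupp.single 1 1) p, coeff (Finsupp.single 0 1 + Finsupp.single 2 k) p, ?_⟩
  conv_lhs => rw [eq_sum_monomial_of_support_subset hsub, Finset.sum_pair hne]
  rw [C_mul_X_eq_monomial, X_pow_eq_monomial, X, monomial_mul, C_mul_monomial, mul_one, mul_one]

end DegreeOne

lemma isLinearAut_of_forall_eq_C_mul_X (h : ∀ i, ∃ r : K, φ (X i) = C r * X i) :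
    IsLinearAut φ := fun i => by
  obtain ⟨r, hr⟩ := h i
  exact ⟨Pi.single i r, by simp [hr, Pi.single_apply, apply_ite C]⟩

lemma isGradedTame_of_xyDegree_le_one {k : ℕ} (hφ : IsGraded w φ) (hw1 : 0 < w 1) (hw2 : w 2 < 0)
    (hw0 : w 0 = w 1 - k * w 2) (hk : 0 < k) (hdeg : ∀ i, xyDegree (φ (X i)) ≤ 1) :
    IsGradedTame w φ := by
  have h0 : 0 < w 0 := by nlinarith
  obtain ⟨l, hl⟩ := exists_map_X_two_eq hφ h0.le hw1.le hw2
  obtain ⟨α, hα⟩ := exists_eq_C_mul_X_zero hw1 hw2 hw0 hk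
    (hφ _ _ (isWeightedHomogeneous_X K w 0)) (hdeg 0)
  obtain ⟨β, γ, hβ⟩ := exists_eq_C_mul_X_one_add hw1 hw2 hw0
    (hφ _ _ (isWeightedHomogeneous_X K w 1)) (hdeg 1)
  have hl0 : l ≠ 0 := fun h => map_X_ne_zero φ 2 (by rw [hl, h, C_0, zero_mul])
  have hα0 : α ≠ 0 := fun h => map_X_ne_zero φ 0 (by rw [hα, h, C_0, zero_mul])
  obtain ⟨ψ, hψ, hψ1, hψk, htame⟩ := exists_isGraded_map_X_eq_sub (i := 1) (j := 0) (q := 1)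
    (s := k) hφ (by decide) (by decide) (by rw [hw0]; push_cast; ring) (γ / (α * l ^ k))
  refine htame (isGradedTame_of_isLinearAut hψ (isLinearAut_of_forall_eq_C_mul_X fun i => ?_))
  match i with
  | 0 => exact ⟨α, (hψk 0 (by decide)).trans hα⟩
  | 2 => exact ⟨l, (hψk 2 (by decide)).trans hl⟩
  | 1 =>
    have hγ : C γ = C (γ / (α * l ^ k)) * (C α * C l ^ k : MvPolynomial (Fin 3) K) := by
      rw [← C_pow, ← C_mul, ← C_mul, div_mul_cancel₀ _ (mul_ne_zero hα0 (pow_ne_zero k hl0))]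
    refine ⟨β, ?_⟩
    rw [hψ1, hβ, map_mul, map_pow, map_pow, hα, hl, hγ]
    ring

end Grading

section Descent

variable {K : Type*} [Field K] [CharZero K] {w : Fin 3 → ℤ} {k : ℕ}

lemma modEq_one_of_mul_eq {c : ℤ} {m n q : ℕ} (hm : (m : ℤ) ≡ 1 [ZMOD c])
    (hn : (n : ℤ) ≡ 1 [ZMOD c]) (h : m = n * q) : (q : ℤ) ≡ 1 [ZMOD c] := by
  have hmul := hn.mul_right q
  rw [one_mul, ← Nat.cast_mul, ← h] at hmul
  exact hmul.symm.trans hm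

lemma exists_eq_mul_add_mul_of_modEq_one {q : ℕ} (hq : (q : ℤ) ≡ 1 [ZMOD w 2]) (hw1 : 0 < w 1)
    (hw2 : w 2 < 0) (hk : k ≤ w 1) (hw0 : w 0 = w 1 - k * w 2) (hq0 : 0 < q) :
    (∃ s : ℕ, w 1 = q * w 0 + s * w 2) ∧ (q = 1 ∨ ∃ s : ℕ, w 0 = q * w 1 + s * w 2) := by
  obtain ⟨r, hr⟩ := hq.dvd
  have hr0 : 0 ≤ r := by nlinarith
  lift r to ℕ using hr0
  obtain ⟨n, hn⟩ := Int.eq_ofNat_of_zero_le hw1.le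
  obtain ⟨m, hm⟩ := Int.eq_ofNat_of_zero_le (neg_nonneg.2 hw2.le)
  have hq' : (q : ℤ) = 1 - w 2 * r := by linear_combination -hr
  refine ⟨⟨k + r * n + r * m * k, ?_⟩, ?_⟩
  · push_cast
    rw [hq', hw0, ← hn, ← hm]
    ring
  · rcases Nat.eq_zero_or_pos r with rfl | hrpos
    · exact Or.inl (by simpa using hq')
    · have hle : k ≤ r * n := by nlinarith
      refine Or.inr ⟨r * n - k, ?_⟩
      rw [Nat.cast_sub hle, hq', hw0]
      push_cast
      rw [← hn]
      ring

lemma exists_isGraded_sum_xyDegree_lt_of_one_lt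
    {φ : MvPolynomial (Fin 3) K ≃ₐ[K] MvPolynomial (Fin 3) K} (hφ : IsGraded w φ)
    (hco : IsCoprime (w 1) (w 2)) (hw1 : 0 < w 1) (hw2 : w 2 < 0) (hk : k ≤ w 1)
    (hw0 : w 0 = w 1 - k * w 2) {i : Fin 3} (hi : 1 < xyDegree (φ (X i))) :
    ∃ ψ : MvPolynomial (Fin 3) K ≃ₐ[K] MvPolynomial (Fin 3) K, IsGraded w ψ ∧
      ∑ k, xyDegree (ψ (X k)) < ∑ k, xyDegree (φ (X k)) ∧
      (IsGradedTame w ψ → IsGradedTame w φ) := by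
  have hw0pos : 0 < w 0 := by nlinarith
  have h01 : w 0 ≡ w 1 [ZMOD w 2] := Int.modEq_iff_dvd.2 ⟨k, by rw [hw0]; ring⟩
  obtain ⟨l, hl⟩ := exists_map_X_two_eq hφ hw0pos.le hw1.le hw2
  have hhom (j : Fin 3) := hφ _ _ (isWeightedHomogeneous_X K w j)
  have hpos0 := xyDegree_pos hw2 hw0pos (hhom 0) (map_X_ne_zero φ 0)
  have hpos1 := xyDegree_pos hw2 hw1 (hhom 1) (map_X_ne_zero φ 1)
  have hmod0 := xyDegree_modEq_one hco h01 h01 (hhom 0) (map_X_ne_zero φ 0)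
  have hmod1 := xyDegree_modEq_one hco h01 rfl (hhom 1) (map_X_ne_zero φ 1)
  have hsum : 2 < xyDegree (φ (X 0)) + xyDegree (φ (X 1)) := by
    have hdeg2 := xyDegree_map_X_two φ hl
    have hi01 : i = 0 ∨ i = 1 ∨ i = 2 := by lia
    rcases hi01 with rfl | rfl | rfl <;> lia
  rcases xyDegree_dvd_or_dvd hl with ⟨q, hq⟩ | ⟨q, hq⟩
  · obtain ⟨⟨s, hs⟩, -⟩ := exists_eq_mul_add_mul_of_modEq_one
      (modEq_one_of_mul_eq hmod1 hmod0 hq) hw1 hw2 hk hw0 (Nat.pos_of_mul_pos_left (hq ▸ hpos1))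
    exact exists_isGraded_sum_xyDegree_lt hφ hl hw2.ne (by decide) (by decide) (by decide) hs
      (hq.trans (mul_comm _ _)) hpos1 hsum
  · obtain ⟨⟨s, hs⟩, rfl | ⟨t, ht⟩⟩ := exists_eq_mul_add_mul_of_modEq_one
      (modEq_one_of_mul_eq hmod0 hmod1 hq) hw1 hw2 hk hw0 (Nat.pos_of_mul_pos_left (hq ▸ hpos0))
    · exact exists_isGraded_sum_xyDegree_lt hφ hl hw2.ne (by decide) (by decide) (by decide) hs
        (by rw [hq, mul_one, one_mul]) hpos1 hsum
    · exact exists_isGraded_sum_xyDegree_lt hφ hl hw2.ne (by decide) (by decide) (by decide) ht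
        (hq.trans (mul_comm _ _)) hpos0 hsum

theorem isGradedTame_of_isGraded (hco : IsCoprime (w 1) (w 2)) (hw1 : 0 < w 1) (hw2 : w 2 < 0)
    (hk0 : 0 < k) (hk : k ≤ w 1) (hw0 : w 0 = w 1 - k * w 2)
    (φ : MvPolynomial (Fin 3) K ≃ₐ[K] MvPolynomial (Fin 3) K) (hφ : IsGraded w φ) :
    IsGradedTame w φ := by
  induction hN : ∑ i, xyDegree (φ (X i)) using Nat.strong_induction_on generalizing φ with
  | _ N ih =>
    by_cases hdeg : ∀ i, xyDegree (φ (X i)) ≤ 1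
    · exact isGradedTame_of_xyDegree_le_one hφ hw1 hw2 hw0 hk0 hdeg
    · push Not at hdeg
      obtain ⟨i, hi⟩ := hdeg
      obtain ⟨ψ, hψ, hlt, htame⟩ :=
        exists_isGraded_sum_xyDegree_lt_of_one_lt hφ hco hw1 hw2 hk hw0 hi
      exact htame (ih _ (hN ▸ hlt) ψ hψ rfl)

end Descent

section QHat

lemma exists_eq_add_mul_of_isGreatest {a b c : ℕ} (hc : 0 < c)
    (hqhat : IsGreatest {q : ℤ | (b : ℤ) * q ≡ a [ZMOD c] ∧ (b : ℤ) * q < a} 1) :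
    ∃ k : ℕ, 0 < k ∧ k ≤ b ∧ (a : ℤ) = b + k * c := by
  obtain ⟨⟨hmod, hlt⟩, hmax⟩ := hqhat
  rw [mul_one] at hmod hlt
  obtain ⟨k, hk⟩ := hmod.dvd
  have hk0 : 0 < k := by nlinarith
  lift k to ℕ using hk0.le
  refine ⟨k, by exact_mod_cast hk0, ?_, by linear_combination hk⟩
  by_contra! hbk
  have hmem : (b : ℤ) * (1 + c) ≡ a [ZMOD c] ∧ (b : ℤ) * (1 + c) < a := by
    refine ⟨Int.modEq_iff_dvd.2 ⟨k - b, by linear_combination hk⟩, ?_⟩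
    nlinarith [Nat.cast_lt (α := ℤ).2 hbk]
  have hle := hmax hmem
  lia

end QHat

end XYDegree

end GradedTame

theorem graded_automorphism_is_graded_tame_of_qhat_eq_one_general
    {K : Type*} [Field K] [CharZero K]
    (a b c : ℕ) (hb : 0 < b) (hc : 0 < c) (hbc : Nat.gcd b c = 1)
    (hqhat : IsGreatest {q : ℤ | (b : ℤ) * q ≡ (a : ℤ) [ZMOD (c : ℤ)] ∧ (b : ℤ) * q < (a : ℤ)} 1)
    (φ : MvPolynomial (Fin 3) K ≃ₐ[K] MvPolynomial (Fin 3) K)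
    (hφ : IsGraded ![(a : ℤ), (b : ℤ), -(c : ℤ)] φ) :
    IsGradedTame ![(a : ℤ), (b : ℤ), -(c : ℤ)] φ := by
  obtain ⟨k, hk0, hkb, ha⟩ := GradedTame.exists_eq_add_mul_of_isGreatest hc hqhat
  have hcoprime : IsCoprime (b : ℤ) (-c) := (Nat.isCoprime_iff_coprime.2 hbc).neg_right
  have hc' : -(c : ℤ) < 0 := by lia
  have ha' : (a : ℤ) = b - k * -c := by linear_combination ha
  exact GradedTame.isGradedTame_of_isGraded (w := ![(a : ℤ), (b : ℤ), -(c : ℤ)]) hcoprime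
    (Int.natCast_pos.2 hb) hc' hk0 (Nat.cast_le.2 hkb) ha' φ hφ

/-- Let `a ≥ b > 0`, `c > 0` with `gcd(a,c) = gcd(b,c) = 1`, let `Γ` be the
`ℤ`-grading of `K[x,y,z]` with `deg x = a`, `deg y = b`, `deg z = -c`, and let
`q̂ = max {q ∈ ℤ : bq ≡ a (mod c), bq < a}`. If `q̂ = 1`, then every `Γ`-graded
automorphism of `K[x,y,z]` is graded-tame. Here `x = X 0`, `y = X 1`, `z = X 2`. -/
theorem graded_automorphism_is_graded_tame_of_qhat_eq_one
    {K : Type*} [Field K] [IsAlgClosed K] [CharZero K]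
    (a b c : ℕ) (ha : 0 < a) (hb : 0 < b) (hc : 0 < c) (hab : b ≤ a)
    (hac : Nat.gcd a c = 1) (hbc : Nat.gcd b c = 1)
    (hqhat : IsGreatest {q : ℤ | (b : ℤ) * q ≡ (a : ℤ) [ZMOD (c : ℤ)] ∧ (b : ℤ) * q < (a : ℤ)} 1)
    (φ : MvPolynomial (Fin 3) K ≃ₐ[K] MvPolynomial (Fin 3) K)
    (hφ : IsGraded ![(a : ℤ), (b : ℤ), -(c : ℤ)] φ) :
    IsGradedTame ![(a : ℤ), (b : ℤ), -(c : ℤ)] φ := by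
  exact graded_automorphism_is_graded_tame_of_qhat_eq_one_general a b c hb hc hbc hqhat φ hφ
end

section
/- Let Γ be the Z-grading of K[x,y,z] with deg x = a, deg y = b, deg z = −c, where a, b, c are nonnegative integers, a ≥ b, at least one of a, b, c equals zero, and (a,b,c) ≠ (0,0,0). Then every Γ-graded automorphism of K[x,y,z] is graded-tame, i.e., a composition of Γ-graded elementary and Γ-graded linear automorphisms. -/
open MvPolynomial

/-!
Let `w i = 0`. The signs of the two remaining weights decide how rigid a graded automorphism `φ` is.

If they have opposite signs, both of the other variables divide their images, so `φ` is triangular.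
If they have the same sign, the polynomials of weight zero are those in `X i` alone, so `φ (X i)` is
affine in `X i`. For distinct weights one more variable is an eigenvector. For equal weights the
other two images are linear forms over `K[X i]`, and the Euclidean algorithm reduces them by
elementary automorphisms.

If exactly one weight is nonzero, `φ` restricts to an automorphism of a plane, and what is needed is
Jung's theorem. Let `f, g` generate `K[x, y]`, of degrees `m, n` with neither dividing the other.
Write `x = G(f, g)` and give the variables of `G` the weights `m, n`. The leading form of `G`
vanishes at the leading forms of `f, g`. Its restriction to a line `X₀ = α` is a polynomial whose
exponents lie in one residue class modulo `m / gcd(m, n)`, and in characteristic zero a nonzero root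
has smaller multiplicity than the number of terms. This bounds how many derivatives `∂₁` are needed
to make it nonvanishing. The Jacobian of `f, ∂₁ˢG(f, g)` controls the degree of `∂₁ˢ⁺¹G(f, g)`, and
comparing degrees contradicts `deg x = 1`. So one degree divides the other; as the Jacobian of
`f, g` is constant, their leading forms are algebraically dependent, and an elementary step lowers
the degree.
-/

namespace GradedTame

section LeadingForm

variable {σ τ R : Type*} [CommSemiring R]

lemma homogeneousComponent_mul_of_totalDegree_le {f g : MvPolynomial σ R} {m n : ℕ}
    (hf : f.totalDegree ≤ m) (hg : g.totalDegree ≤ n) :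
    homogeneousComponent (m + n) (f * g) =
      homogeneousComponent m f * homogeneousComponent n g := by
  classical
  ext d
  have hterm : ∀ x ∈ Finset.HasAntidiagonal.antidiagonal d,
      (if x.1.degree = m then coeff x.1 f else 0) * (if x.2.degree = n then coeff x.2 g else 0) =
        if d.degree = m + n then coeff x.1 f * coeff x.2 g else 0 := by
    rintro ⟨s, t⟩ hst
    obtain rfl : s + t = d := Finset.HasAntidiagonal.mem_antidiagonal.1 hst
    by_cases hs : coeff s f = 0
    · simp [hs]
    by_cases ht : coeff t g = 0
    · simp [ht]
    have hsm : s.degree ≤ m := (le_totalDegree (mem_support_iff.2 hs)).trans hf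
    have htn : t.degree ≤ n := (le_totalDegree (mem_support_iff.2 ht)).trans hg
    simp only [map_add]
    split_ifs <;> first | rfl | omega | simp
  simp only [coeff_homogeneousComponent, coeff_mul]
  rw [Finset.sum_congr rfl hterm]
  split_ifs <;> simp

lemma homogeneousComponent_pow_of_totalDegree_le {f : MvPolynomial σ R} {m : ℕ}
    (hf : f.totalDegree ≤ m) (k : ℕ) :
    homogeneousComponent (k * m) (f ^ k) = homogeneousComponent m f ^ k := by
  induction k with
  | zero => simp
  | succ k ih =>
    have hfk : (f ^ k).totalDegree ≤ k * m :=
      (totalDegree_pow f k).trans (Nat.mul_le_mul_left k hf)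
    rw [pow_succ, Nat.succ_mul, homogeneousComponent_mul_of_totalDegree_le hfk hf, ih, pow_succ]

lemma totalDegree_prod_pow_le_weight {p : σ → MvPolynomial τ R} {n : σ → ℕ}
    (hp : ∀ i, (p i).totalDegree ≤ n i) (s : σ →₀ ℕ) :
    (s.prod fun i k ↦ p i ^ k).totalDegree ≤ Finsupp.weight n s := by
  rw [Finsupp.weight_apply]
  refine (totalDegree_finsetProd _ _).trans (Finset.sum_le_sum fun i _ ↦ ?_)
  exact (totalDegree_pow _ _).trans (Nat.mul_le_mul_left _ (hp i))

lemma homogeneousComponent_prod_pow {p : σ → MvPolynomial τ R} {n : σ → ℕ}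
    (hp : ∀ i, (p i).totalDegree ≤ n i) (s : σ →₀ ℕ) :
    homogeneousComponent (Finsupp.weight n s) (s.prod fun i k ↦ p i ^ k) =
      s.prod fun i k ↦ homogeneousComponent (n i) (p i) ^ k := by
  induction s using Finsupp.induction with
  | zero => simp
  | single_add i k s _ _ ih =>
    have hsplit (q : σ → MvPolynomial τ R) : ((Finsupp.single i k + s).prod fun i k ↦ q i ^ k) =
        q i ^ k * s.prod fun i k ↦ q i ^ k := by
      classical
      rw [Finsupp.prod_add_index' (by simp) (by simp [pow_add]),
        Finsupp.prod_single_index (by simp)]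
    have hpow : (p i ^ k).totalDegree ≤ k * n i :=
      (totalDegree_pow _ _).trans (Nat.mul_le_mul_left k (hp i))
    rw [hsplit, hsplit, map_add, Finsupp.weight_single, smul_eq_mul,
      homogeneousComponent_mul_of_totalDegree_le hpow (totalDegree_prod_pow_le_weight hp s), ih,
      homogeneousComponent_pow_of_totalDegree_le (hp i)]

lemma homogeneousComponent_aeval {p : σ → MvPolynomial τ R} {n : σ → ℕ}
    (hp : ∀ i, (p i).totalDegree ≤ n i) {G : MvPolynomial σ R} {W : ℕ}
    (hG : weightedTotalDegree n G ≤ W) :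
    homogeneousComponent W (aeval p G) =
      aeval (fun i ↦ homogeneousComponent (n i) (p i)) (weightedHomogeneousComponent n W G) := by
  classical
  conv_lhs => rw [G.as_sum]
  rw [weightedHomogeneousComponent_apply, Finset.sum_filter, map_sum, map_sum, map_sum]
  refine Finset.sum_congr rfl fun s hs ↦ ?_
  rw [aeval_monomial, algebraMap_eq, homogeneousComponent_C_mul]
  split_ifs with hW
  · rw [aeval_monomial, algebraMap_eq, ← hW, homogeneousComponent_prod_pow hp]
  · rw [map_zero, homogeneousComponent_eq_zero, mul_zero]
    exact (totalDegree_prod_pow_le_weight hp s).trans_lt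
      (((le_weightedTotalDegree n hs).trans hG).lt_of_ne hW)

lemma totalDegree_lt_of_homogeneousComponent_eq_zero {f : MvPolynomial σ R} {m : ℕ} (hm : m ≠ 0)
    (hf : f.totalDegree ≤ m) (h : homogeneousComponent m f = 0) : f.totalDegree < m := by
  refine (Finset.sup_lt_iff (Nat.pos_of_ne_zero hm)).2 fun s hs ↦ ?_
  refine ((le_totalDegree hs).trans hf).lt_of_ne fun hsm ↦ mem_support_iff.1 hs ?_
  have hcoeff := congrArg (coeff s) h
  rwa [coeff_homogeneousComponent, coeff_zero, if_pos (show s.degree = m from hsm)] at hcoeff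

lemma weightedHomogeneousComponent_weightedTotalDegree_ne_zero (n : σ → ℕ)
    {f : MvPolynomial σ R} (hf : f ≠ 0) :
    weightedHomogeneousComponent n (weightedTotalDegree n f) f ≠ 0 := by
  classical
  obtain ⟨s, hs, hsW⟩ := Finset.exists_mem_eq_sup f.support (support_nonempty.2 hf)
    (Finsupp.weight n)
  refine ne_zero_iff.2 ⟨s, ?_⟩
  rw [coeff_weightedHomogeneousComponent, weightedTotalDegree, if_pos hsW.symm]
  exact mem_support_iff.1 hs

lemma homogeneousComponent_totalDegree_ne_zero {f : MvPolynomial σ R} (hf : f ≠ 0) :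
    homogeneousComponent f.totalDegree f ≠ 0 := by
  rw [← weightedTotalDegree_one]
  exact weightedHomogeneousComponent_weightedTotalDegree_ne_zero 1 hf

end LeadingForm

section Derivation

variable {σ R : Type*} [CommSemiring R]

lemma derivation_aeval [Fintype σ] {A M : Type*} [CommSemiring A] [Algebra R A] [AddCommMonoid M]
    [Module A M] [Module R M] (D : Derivation R A M) (p : σ → A) (G : MvPolynomial σ R) :
    D (aeval p G) = ∑ l, aeval p (pderiv l G) • D (p l) := by
  classical
  induction G using MvPolynomial.induction_on with
  | C a => simp [algHom_C]
  | add G H hG hH => simp [hG, hH, add_smul, Finset.sum_add_distrib]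
  | mul_X G i hG =>
    simp [hG, Derivation.leibniz, pderiv_X, Pi.single_apply, add_smul, Finset.sum_add_distrib,
      mul_smul, Finset.smul_sum, apply_ite (aeval p), ite_smul]

lemma weightedTotalDegree_pderiv_le (n : σ → ℕ) (i : σ) (f : MvPolynomial σ R) :
    weightedTotalDegree n (pderiv i f) ≤ weightedTotalDegree n f - n i := by
  refine Finset.sup_le fun s hs ↦ Nat.le_sub_of_add_le ?_
  rw [mem_support_iff, coeff_pderiv] at hs
  have hle := le_weightedTotalDegree n (mem_support_iff.2 (left_ne_zero_of_mul hs))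
  rwa [map_add, Finsupp.weight_single, one_smul] at hle

lemma totalDegree_pderiv_le (i : σ) (f : MvPolynomial σ R) :
    (pderiv i f).totalDegree ≤ f.totalDegree - 1 := by
  simpa only [weightedTotalDegree_one, Pi.one_apply] using weightedTotalDegree_pderiv_le 1 i f

lemma weightedHomogeneousComponent_pderiv {M : Type*} [AddCancelCommMonoid M] (w : σ → M) (d : M)
    (i : σ) (f : MvPolynomial σ R) :
    weightedHomogeneousComponent w d (pderiv i f) =
      pderiv i (weightedHomogeneousComponent w (d + w i) f) := by
  classical
  ext s
  simp only [coeff_weightedHomogeneousComponent, coeff_pderiv, map_add, Finsupp.weight_single,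
    one_smul, add_left_inj, ite_mul, zero_mul]

lemma homogeneousComponent_pderiv (n : ℕ) (i : σ) (f : MvPolynomial σ R) :
    homogeneousComponent n (pderiv i f) = pderiv i (homogeneousComponent (n + 1) f) :=
  weightedHomogeneousComponent_pderiv 1 n i f

lemma weightedHomogeneousComponent_iterate_pderiv (n : σ → ℕ) (d : ℕ)
    (i : σ) (s : ℕ) (f : MvPolynomial σ R) :
    weightedHomogeneousComponent n d ((pderiv i)^[s] f) =
      (pderiv i)^[s] (weightedHomogeneousComponent n (d + s * n i) f) := by
  induction s generalizing d with
  | zero => simp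
  | succ s ih =>
    rw [Function.iterate_succ_apply', weightedHomogeneousComponent_pderiv, ih,
      Function.iterate_succ_apply', Nat.succ_mul, Nat.add_right_comm, Nat.add_assoc]

lemma weightedTotalDegree_iterate_pderiv_le (n : σ → ℕ) (i : σ) (s : ℕ) (f : MvPolynomial σ R) :
    weightedTotalDegree n ((pderiv i)^[s] f) ≤ weightedTotalDegree n f - s * n i := by
  induction s with
  | zero => simp
  | succ s ih =>
    rw [Function.iterate_succ_apply', Nat.succ_mul, ← Nat.sub_sub]
    exact (weightedTotalDegree_pderiv_le n i _).trans (Nat.sub_le_sub_right ih _)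

end Derivation

section Jacobian

variable {R : Type*} [CommRing R]

/-- The Jacobian determinant of a pair of polynomials in two variables. -/
noncomputable def jacobian (f g : MvPolynomial (Fin 2) R) : MvPolynomial (Fin 2) R :=
  pderiv 0 f * pderiv 1 g - pderiv 1 f * pderiv 0 g

lemma jacobian_swap (f g : MvPolynomial (Fin 2) R) : jacobian g f = -jacobian f g := by
  simp only [jacobian]
  ring

lemma jacobian_X_X : jacobian (X 0) (X 1 : MvPolynomial (Fin 2) R) = 1 := by
  simp [jacobian]

lemma jacobian_aeval_aeval (p : Fin 2 → MvPolynomial (Fin 2) R) (G H : MvPolynomial (Fin 2) R) :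
    jacobian (aeval p G) (aeval p H) = aeval p (jacobian G H) * jacobian (p 0) (p 1) := by
  simp only [jacobian, derivation_aeval, Fin.sum_univ_two, smul_eq_mul, map_sub, map_mul]
  ring

lemma jacobian_aeval (p : Fin 2 → MvPolynomial (Fin 2) R) (G : MvPolynomial (Fin 2) R) :
    jacobian (p 0) (aeval p G) = aeval p (pderiv 1 G) * jacobian (p 0) (p 1) := by
  simpa [jacobian] using jacobian_aeval_aeval p (X 0) G

lemma totalDegree_pos_of_jacobian_ne_zero {f g : MvPolynomial (Fin 2) R} (h : jacobian f g ≠ 0) :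
    0 < f.totalDegree := by
  refine Nat.pos_of_ne_zero fun hf ↦ h ?_
  rw [totalDegree_eq_zero_iff_eq_C.1 hf]
  simp [jacobian]

lemma forall_totalDegree_pos_of_jacobian_ne_zero {p : Fin 2 → MvPolynomial (Fin 2) R}
    (hp : jacobian (p 0) (p 1) ≠ 0) : ∀ i, 0 < (p i).totalDegree :=
  Fin.forall_fin_two.2 ⟨totalDegree_pos_of_jacobian_ne_zero hp,
    totalDegree_pos_of_jacobian_ne_zero (g := p 0) (by rwa [jacobian_swap, neg_ne_zero])⟩

lemma totalDegree_jacobian_add_two_le {f g : MvPolynomial (Fin 2) R} (h : jacobian f g ≠ 0) :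
    (jacobian f g).totalDegree + 2 ≤ f.totalDegree + g.totalDegree := by
  have hf := totalDegree_pos_of_jacobian_ne_zero h
  have hg := totalDegree_pos_of_jacobian_ne_zero (f := g) (g := f)
    (by rwa [jacobian_swap, neg_ne_zero])
  have hmul (i j : Fin 2) : (pderiv i f * pderiv j g).totalDegree ≤
      (f.totalDegree - 1) + (g.totalDegree - 1) :=
    (totalDegree_mul _ _).trans (add_le_add (totalDegree_pderiv_le i f) (totalDegree_pderiv_le j g))
  have hsub : (jacobian f g).totalDegree ≤ (f.totalDegree - 1) + (g.totalDegree - 1) :=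
    (totalDegree_sub _ _).trans (max_le (hmul 0 1) (hmul 1 0))
  omega

lemma homogeneousComponent_jacobian {f g : MvPolynomial (Fin 2) R} {m n : ℕ}
    (hf : f.totalDegree ≤ m + 1) (hg : g.totalDegree ≤ n + 1) :
    homogeneousComponent (m + n) (jacobian f g) =
      jacobian (homogeneousComponent (m + 1) f) (homogeneousComponent (n + 1) g) := by
  have hf' (i : Fin 2) : (pderiv i f).totalDegree ≤ m :=
    (totalDegree_pderiv_le i f).trans (Nat.sub_le_of_le_add hf)
  have hg' (i : Fin 2) : (pderiv i g).totalDegree ≤ n :=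
    (totalDegree_pderiv_le i g).trans (Nat.sub_le_of_le_add hg)
  simp only [jacobian, map_sub, homogeneousComponent_mul_of_totalDegree_le (hf' _) (hg' _),
    homogeneousComponent_pderiv]

end Jacobian

section Proportionality

open scoped MonomialOrder

variable {σ K : Type*} [Field K] [CharZero K]

lemma coeff_X_mul_pderiv {R : Type*} [CommSemiring R] (i : σ) (s : σ →₀ ℕ) (f : MvPolynomial σ R) :
    coeff s (X i * pderiv i f) = s i * coeff s f := by
  classical
  induction f using MvPolynomial.induction_on' with
  | monomial t a =>
    rw [X_mul_pderiv_monomial, coeff_smul, nsmul_eq_mul, coeff_monomial]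
    split_ifs with h <;> simp [h]
  | add f g hf hg => rw [map_add, mul_add, coeff_add, hf, hg, coeff_add, mul_add]

lemma degree_eq_degree_of_mul_pderiv_eq (m : MonomialOrder σ) {f h : MvPolynomial σ K}
    (hf : f ≠ 0) (hh : h ≠ 0) (hfh : ∀ i, f * pderiv i h = h * pderiv i f) :
    m.degree f = m.degree h := by
  have hle (i : σ) (g : MvPolynomial σ K) : m.degree (X i * pderiv i g) ≼[m] m.degree g := by
    refine m.degree_le_iff.2 fun s hs ↦ m.le_degree ?_
    rw [mem_support_iff, coeff_X_mul_pderiv] at hs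
    exact mem_support_iff.2 (right_ne_zero_of_mul hs)
  have hcoeff (i : σ) (g g' : MvPolynomial σ K) :
      coeff (m.degree g' + m.degree g) (g' * (X i * pderiv i g)) =
        m.leadingCoeff g' * (m.degree g i * m.leadingCoeff g) := by
    rw [m.coeff_mul_of_add_of_degree_le le_rfl (hle i g), coeff_X_mul_pderiv]
    rfl
  ext i
  have heuler : f * (X i * pderiv i h) = h * (X i * pderiv i f) := by
    linear_combination X i * hfh i
  have hlead := hcoeff i h f
  rw [heuler, add_comm, hcoeff i f h] at hlead
  have hne : m.leadingCoeff f * m.leadingCoeff h ≠ 0 :=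
    mul_ne_zero (m.leadingCoeff_ne_zero_iff.2 hf) (m.leadingCoeff_ne_zero_iff.2 hh)
  exact_mod_cast mul_left_cancel₀ (b := (m.degree f i : K)) (c := m.degree h i) hne
    (by linear_combination hlead)

lemma exists_eq_C_mul_of_mul_pderiv_eq {f h : MvPolynomial σ K} (hh : h ≠ 0)
    (hfh : ∀ i, f * pderiv i h = h * pderiv i f) : ∃ c : K, f = C c * h := by
  obtain ⟨_, _⟩ := exists_wellFoundedGT σ
  let m : MonomialOrder σ := MonomialOrder.lex
  set c := coeff (m.degree h) f / coeff (m.degree h) h with hc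
  refine ⟨c, sub_eq_zero.1 ?_⟩
  by_contra hne
  have hdeg : m.degree (f - C c * h) = m.degree h := by
    refine degree_eq_degree_of_mul_pderiv_eq m hne hh fun i ↦ ?_
    rw [map_sub, pderiv_C_mul]
    linear_combination hfh i
  refine m.leadingCoeff_ne_zero_iff.2 hne ?_
  rw [MonomialOrder.leadingCoeff, hdeg, coeff_sub, coeff_C_mul, hc,
    div_mul_cancel₀ _ (m.coeff_degree_ne_zero_iff.2 hh), sub_self]

lemma natCast_mul_mul_pderiv_eq_of_jacobian_eq_zero {R : Type*} [CommRing R]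
    {f g : MvPolynomial (Fin 2) R} {m n : ℕ} (hf : f.IsHomogeneous m) (hg : g.IsHomogeneous n)
    (hfg : jacobian f g = 0) (i : Fin 2) :
    m * (f * pderiv i g) = n * (g * pderiv i f) := by
  have hfeuler := hf.sum_X_mul_pderiv
  have hgeuler := hg.sum_X_mul_pderiv
  rw [Fin.sum_univ_two, nsmul_eq_mul] at hfeuler hgeuler
  rw [jacobian] at hfg
  fin_cases i <;> dsimp only [Fin.zero_eta, Fin.mk_one]
  · linear_combination pderiv 0 f * hgeuler - pderiv 0 g * hfeuler - X 1 * hfg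
  · linear_combination pderiv 1 f * hgeuler - pderiv 1 g * hfeuler + X 0 * hfg

lemma exists_eq_C_mul_pow_of_jacobian_eq_zero {f g : MvPolynomial (Fin 2) K} {k n : ℕ}
    (hk : k ≠ 0) (hn : n ≠ 0) (hf : f.IsHomogeneous (k * n)) (hg : g.IsHomogeneous n) (hg0 : g ≠ 0)
    (hfg : jacobian f g = 0) : ∃ c : K, f = C c * g ^ k := by
  refine exists_eq_C_mul_of_mul_pderiv_eq (pow_ne_zero k hg0) fun i ↦ ?_
  have hprop := natCast_mul_mul_pderiv_eq_of_jacobian_eq_zero hf hg hfg i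
  have hpow : g ^ k = g ^ (k - 1) * g := (pow_sub_one_mul hk g).symm
  have hn' : (n : MvPolynomial (Fin 2) K) ≠ 0 := Nat.cast_ne_zero.2 hn
  rw [Derivation.leibniz_pow, nsmul_eq_mul, smul_eq_mul, hpow]
  refine mul_left_cancel₀ hn' ?_
  push_cast at hprop
  linear_combination g ^ (k - 1) * hprop

lemma exists_totalDegree_sub_C_mul_pow_lt {f g : MvPolynomial (Fin 2) K} (hf : f.totalDegree ≠ 0)
    (hdvd : g.totalDegree ∣ f.totalDegree)
    (hjac : (jacobian f g).totalDegree + 2 < f.totalDegree + g.totalDegree) :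
    ∃ (c : K) (k : ℕ), (f - C c * g ^ k).totalDegree < f.totalDegree := by
  obtain ⟨k, hk⟩ := hdvd
  rw [mul_comm] at hk
  obtain ⟨hk0, hg⟩ : k ≠ 0 ∧ g.totalDegree ≠ 0 := by rwa [hk, mul_ne_zero_iff] at hf
  have hg0 : g ≠ 0 := by
    rintro rfl
    exact hg totalDegree_zero
  have hlead : jacobian (homogeneousComponent f.totalDegree f)
      (homogeneousComponent g.totalDegree g) = 0 := by
    obtain ⟨m, hm⟩ := Nat.exists_eq_succ_of_ne_zero hf
    obtain ⟨n, hn⟩ := Nat.exists_eq_succ_of_ne_zero hg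
    rw [hm, hn, ← homogeneousComponent_jacobian hm.le hn.le]
    exact homogeneousComponent_eq_zero _ _ (by omega)
  obtain ⟨c, hc⟩ := exists_eq_C_mul_pow_of_jacobian_eq_zero hk0 hg
    (hk ▸ homogeneousComponent_isHomogeneous _ _) (homogeneousComponent_isHomogeneous _ _)
    (homogeneousComponent_totalDegree_ne_zero hg0) hlead
  refine ⟨c, k, totalDegree_lt_of_homogeneousComponent_eq_zero hf ?_ ?_⟩
  · refine (totalDegree_sub _ _).trans (max_le le_rfl ?_)
    rw [← smul_eq_C_mul, hk]
    exact (totalDegree_smul_le _ _).trans (totalDegree_pow _ _)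
  · rw [map_sub, homogeneousComponent_C_mul, hc, hk,
      homogeneousComponent_pow_of_totalDegree_le le_rfl, sub_self]

end Proportionality

section Sparse

open scoped Polynomial

variable {R : Type*} [CommRing R] [IsDomain R] [CharZero R]

lemma support_X_mul_derivative_sub (P : R[X]) (k : ℕ) :
    (Polynomial.X * Polynomial.derivative P - Polynomial.C (k : R) * P).support =
      P.support.erase k := by
  ext j
  have hcoeff : (Polynomial.X * Polynomial.derivative P - Polynomial.C (k : R) * P).coeff j =
      ((j : R) - k) * P.coeff j := by
    rw [Polynomial.coeff_sub, Polynomial.coeff_C_mul]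
    cases j with
    | zero => simp
    | succ j =>
      rw [Polynomial.coeff_X_mul, Polynomial.coeff_derivative]
      push_cast
      ring
  rw [Polynomial.mem_support_iff, hcoeff, Finset.mem_erase, Polynomial.mem_support_iff,
    mul_ne_zero_iff, sub_ne_zero, Nat.cast_injective.ne_iff]

lemma rootMultiplicity_lt_card_support {P : R[X]} (hP : P ≠ 0) {β : R} (hβ : β ≠ 0) :
    P.rootMultiplicity β < P.support.card := by
  induction hcard : P.support.card generalizing P with
  | zero => exact absurd (Polynomial.card_support_eq_zero.1 hcard) hP
  | succ r ih =>
    obtain ⟨k, hk⟩ := Polynomial.nonempty_support_iff.2 hP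
    set E := Polynomial.X * Polynomial.derivative P - Polynomial.C (k : R) * P with hE
    have hEcard : E.support.card = r := by
      rw [hE, support_X_mul_derivative_sub, Finset.card_erase_of_mem hk, hcard, Nat.add_sub_cancel]
    by_cases hE0 : E = 0
    · obtain ⟨j, c, hc, rfl⟩ := Polynomial.card_support_eq_one.1 (show P.support.card = 1 by
        rw [hcard, ← hEcard, hE0, Polynomial.support_zero, Finset.card_empty])
      have hroot : ¬(Polynomial.C c * Polynomial.X ^ j).IsRoot β := by
        simp [hc, hβ]
      rw [Polynomial.rootMultiplicity_eq_zero hroot]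
      exact r.succ_pos
    · have hdvd : (Polynomial.X - Polynomial.C β) ^ (P.rootMultiplicity β - 1) ∣ E := by
        have hPdvd := Polynomial.pow_rootMultiplicity_dvd P β
        exact dvd_sub ((Polynomial.pow_sub_one_dvd_derivative_of_pow_dvd hPdvd).mul_left _)
          (((pow_dvd_pow _ (Nat.sub_le _ 1)).trans hPdvd).mul_left _)
      have hle := (Polynomial.le_rootMultiplicity_iff hE0).2 hdvd
      have hlt := ih hE0 hEcard
      omega

lemma rootMultiplicity_mul_le_natDegree_of_modEq {P : R[X]} (hP : P ≠ 0) {β : R} (hβ : β ≠ 0)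
    {q : ℕ} (hq : ∀ i ∈ P.support, ∀ j ∈ P.support, i ≡ j [MOD q]) :
    P.rootMultiplicity β * q ≤ P.natDegree := by
  have hcard : P.support.card ≤ (Finset.range (P.natDegree / q + 1)).card := by
    refine Finset.card_le_card_of_injOn (· / q) (fun i hi ↦ ?_) fun i hi j hj hij ↦ ?_
    · exact Finset.mem_coe.2 (Finset.mem_range.2 (Nat.lt_succ_of_le
        (Nat.div_le_div_right (Polynomial.le_natDegree_of_mem_supp i hi))))
    · have hmod : i % q = j % q := hq i hi j hj
      rw [← Nat.div_add_mod i q, ← Nat.div_add_mod j q, hmod]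
      exact congrArg (q * · + j % q) hij
  rw [Finset.card_range] at hcard
  exact (Nat.mul_le_mul_right q (Nat.le_of_lt_succ
    ((rootMultiplicity_lt_card_support hP hβ).trans_le hcard))).trans (Nat.div_mul_le_self _ q)

end Sparse

section DegreeInequality

open scoped Polynomial

variable {K : Type*} [Field K]

/-- Substitution of a constant for the first of two variables: `G(x, y) ↦ G(α, Y)`. It turns a
weighted homogeneous polynomial into a polynomial whose exponents lie in one residue class. -/
noncomputable def specializeFst (α : K) : MvPolynomial (Fin 2) K →ₐ[K] K[X] :=
  aeval ![Polynomial.C α, Polynomial.X]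

lemma eval_specializeFst (x : Fin 2 → K) (G : MvPolynomial (Fin 2) K) :
    (specializeFst (x 0) G).eval (x 1) = eval x G := by
  induction G using MvPolynomial.induction_on with
  | C a => simp [specializeFst, algHom_C]
  | add G H hG hH => simp [hG, hH]
  | mul_X G i hG => fin_cases i <;> simp_all [specializeFst]

lemma derivative_specializeFst (α : K) (G : MvPolynomial (Fin 2) K) :
    Polynomial.derivative (specializeFst α G) = specializeFst α (pderiv 1 G) := by
  simpa [specializeFst, Fin.sum_univ_two] using
    derivation_aeval Polynomial.derivative' ![Polynomial.C α, Polynomial.X] G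

lemma iterate_derivative_specializeFst (α : K) (G : MvPolynomial (Fin 2) K) (s : ℕ) :
    Polynomial.derivative^[s] (specializeFst α G) = specializeFst α ((pderiv 1)^[s] G) :=
  ((Function.Semiconj.iterate_right (f := specializeFst α)
    (fun G ↦ (derivative_specializeFst α G).symm) s) G).symm

lemma coeff_specializeFst (α : K) (G : MvPolynomial (Fin 2) K) (j : ℕ) :
    (specializeFst α G).coeff j = ∑ t ∈ G.support with t 1 = j, coeff t G * α ^ t 0 := by
  rw [specializeFst, aeval_def, eval₂_eq', Polynomial.finsetSum_coeff, Finset.sum_filter]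
  refine Finset.sum_congr rfl fun t _ ↦ ?_
  simp only [Fin.prod_univ_two, Matrix.cons_val_zero, Matrix.cons_val_one,
    Polynomial.algebraMap_eq, ← Polynomial.C_pow, ← mul_assoc, ← Polynomial.C_mul,
    Polynomial.coeff_C_mul_X_pow, eq_comm]

lemma exists_mem_support_of_coeff_specializeFst_ne_zero {α : K} {G : MvPolynomial (Fin 2) K} {j : ℕ}
    (h : (specializeFst α G).coeff j ≠ 0) : ∃ t ∈ G.support, t 1 = j := by
  rw [coeff_specializeFst] at h
  obtain ⟨t, ht, -⟩ := Finset.exists_ne_zero_of_sum_ne_zero h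
  exact ⟨t, Finset.mem_filter.1 ht⟩

variable {n : Fin 2 → ℕ} {W : ℕ} {H : MvPolynomial (Fin 2) K}

lemma weight_eq_of_mem_support (hH : H.IsWeightedHomogeneous n W) {t : Fin 2 →₀ ℕ}
    (ht : t ∈ H.support) : t 0 * n 0 + t 1 * n 1 = W := by
  have hweight := hH (mem_support_iff.1 ht)
  rwa [Finsupp.weight_eq_sum, Fin.sum_univ_two] at hweight

lemma specializeFst_ne_zero (hH : H.IsWeightedHomogeneous n W) (hn : n 0 ≠ 0) (hH0 : H ≠ 0)
    {α : K} (hα : α ≠ 0) : specializeFst α H ≠ 0 := by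
  obtain ⟨t, ht⟩ := support_nonempty.2 hH0
  have hfilter : {u ∈ H.support | u 1 = t 1} = {t} := by
    refine Finset.eq_singleton_iff_unique_mem.2 ⟨Finset.mem_filter.2 ⟨ht, rfl⟩, fun u hu ↦ ?_⟩
    obtain ⟨hu, hu1⟩ := Finset.mem_filter.1 hu
    have hu0 : u 0 * n 0 = t 0 * n 0 := by
      have hut := (weight_eq_of_mem_support hH hu).trans (weight_eq_of_mem_support hH ht).symm
      rwa [hu1, Nat.add_right_cancel_iff] at hut
    ext l
    fin_cases l
    exacts [Nat.eq_of_mul_eq_mul_right (Nat.pos_of_ne_zero hn) hu0, hu1]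
  intro h
  have hcoeff := congrArg (Polynomial.coeff · (t 1)) h
  simp only [coeff_specializeFst, hfilter, Finset.sum_singleton, Polynomial.coeff_zero] at hcoeff
  exact mul_ne_zero (mem_support_iff.1 ht) (pow_ne_zero _ hα) hcoeff

lemma modEq_of_mem_support_specializeFst (hH : H.IsWeightedHomogeneous n W) (hn : n 0 ≠ 0)
    {α : K} {i j : ℕ} (hi : i ∈ (specializeFst α H).support)
    (hj : j ∈ (specializeFst α H).support) :
    i ≡ j [MOD n 0 / (n 0).gcd (n 1)] := by
  obtain ⟨t, ht, rfl⟩ := exists_mem_support_of_coeff_specializeFst_ne_zero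
    (Polynomial.mem_support_iff.1 hi)
  obtain ⟨u, hu, rfl⟩ := exists_mem_support_of_coeff_specializeFst_ne_zero
    (Polynomial.mem_support_iff.1 hj)
  refine Nat.ModEq.cancel_right_div_gcd (Nat.pos_of_ne_zero hn) ?_
  have hmod (v : Fin 2 →₀ ℕ) (hv : v ∈ H.support) : v 1 * n 1 ≡ W [MOD n 0] := by
    rw [← weight_eq_of_mem_support hH hv, Nat.ModEq, Nat.mul_add_mod_self_right]
  exact (hmod t ht).trans (hmod u hu).symm

lemma totalDegree_aeval_iterate_pderiv_add_le {p : Fin 2 → MvPolynomial (Fin 2) K}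
    (hp : jacobian (p 0) (p 1) ≠ 0) {G : MvPolynomial (Fin 2) K} {s : ℕ}
    (hs : aeval p ((pderiv 1)^[s] G) ≠ 0) :
    (aeval p ((pderiv 1)^[s] G)).totalDegree + s * ((jacobian (p 0) (p 1)).totalDegree + 2) ≤
      s * (p 0).totalDegree + (aeval p G).totalDegree := by
  induction s with
  | zero => simp
  | succ s ih =>
    rw [Function.iterate_succ_apply'] at hs ⊢
    set H := (pderiv 1)^[s] G
    have hjac : jacobian (p 0) (aeval p H) ≠ 0 := by
      rw [jacobian_aeval]
      exact mul_ne_zero hs hp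
    have hH : aeval p H ≠ 0 := fun h ↦ hjac <| by
      rw [h]
      simp [jacobian]
    have hdeg := totalDegree_jacobian_add_two_le hjac
    rw [jacobian_aeval, totalDegree_mul_of_isDomain hs hp] at hdeg
    have := ih hH
    lia

variable [CharZero K]

lemma rootMultiplicity_specializeFst_mul_lcm_le (hH : H.IsWeightedHomogeneous n W) (hn : n 0 ≠ 0)
    (hH0 : H ≠ 0) {α β : K} (hα : α ≠ 0) (hβ : β ≠ 0) :
    (specializeFst α H).rootMultiplicity β * (n 0).lcm (n 1) ≤ W := by
  have hP := specializeFst_ne_zero hH hn hH0 hα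
  obtain ⟨t, ht, htdeg⟩ := exists_mem_support_of_coeff_specializeFst_ne_zero
    (Polynomial.leadingCoeff_ne_zero.2 hP)
  have hmult := rootMultiplicity_mul_le_natDegree_of_modEq hP hβ fun i hi j hj ↦
    modEq_of_mem_support_specializeFst hH hn hi hj
  calc
    _ = (specializeFst α H).rootMultiplicity β * (n 0 / (n 0).gcd (n 1)) * n 1 := by
      rw [Nat.lcm, ← Nat.div_mul_right_comm (Nat.gcd_dvd_left _ _), mul_assoc]
    _ ≤ t 1 * n 1 := Nat.mul_le_mul_right _ (htdeg ▸ hmult)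
    _ ≤ W := (Nat.le_add_left _ _).trans_eq (weight_eq_of_mem_support hH ht)

lemma exists_eval_iterate_pderiv_ne_zero (hH : H.IsWeightedHomogeneous n W) (hn : n 0 ≠ 0)
    (hH0 : H ≠ 0) {x : Fin 2 → K} (hx : ∀ i, x i ≠ 0) :
    ∃ s, s * (n 0).lcm (n 1) ≤ W ∧ eval x ((pderiv 1)^[s] H) ≠ 0 := by
  have hP := specializeFst_ne_zero hH hn hH0 (hx 0)
  refine ⟨_, rootMultiplicity_specializeFst_mul_lcm_le hH hn hH0 (hx 0) (hx 1), ?_⟩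
  rw [← eval_specializeFst, ← iterate_derivative_specializeFst,
    Polynomial.eval_iterate_derivative_rootMultiplicity, nsmul_eq_mul]
  exact mul_ne_zero (Nat.cast_ne_zero.2 (Nat.factorial_ne_zero _))
    (Polynomial.eval_divByMonic_pow_rootMultiplicity_ne_zero _ hP)

lemma exists_aeval_iterate_pderiv_ne_zero {p : Fin 2 → MvPolynomial (Fin 2) K}
    (hp : ∀ i, (p i).totalDegree ≠ 0) {G : MvPolynomial (Fin 2) K} (hG : G ≠ 0) :
    ∃ s, s * (p 0).totalDegree.lcm (p 1).totalDegree ≤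
        weightedTotalDegree (fun i ↦ (p i).totalDegree) G ∧
      aeval p ((pderiv 1)^[s] G) ≠ 0 ∧
      weightedTotalDegree (fun i ↦ (p i).totalDegree) G ≤
        (aeval p ((pderiv 1)^[s] G)).totalDegree + s * (p 1).totalDegree := by
  set n : Fin 2 → ℕ := fun i ↦ (p i).totalDegree
  set W := weightedTotalDegree n G
  have hlead (i : Fin 2) : homogeneousComponent (n i) (p i) ≠ 0 :=
    homogeneousComponent_totalDegree_ne_zero fun h ↦ hp i (by rw [h, totalDegree_zero])
  obtain ⟨y, hy⟩ : ∃ y, eval y (∏ i, homogeneousComponent (n i) (p i)) ≠ 0 := by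
    by_contra! hzero
    exact Finset.prod_ne_zero_iff.2 (fun i _ ↦ hlead i) (MvPolynomial.funext hzero)
  rw [map_prod, Finset.prod_ne_zero_iff] at hy
  obtain ⟨s, hs, hsy⟩ := exists_eval_iterate_pderiv_ne_zero
    (weightedHomogeneousComponent_isWeightedHomogeneous W G)
    (hp 0) (weightedHomogeneousComponent_weightedTotalDegree_ne_zero n hG)
    fun i ↦ hy i (Finset.mem_univ i)
  have hlcm : n 1 ≤ (n 0).lcm (n 1) :=
    Nat.le_of_dvd (Nat.pos_of_ne_zero (Nat.lcm_ne_zero (hp 0) (hp 1))) (Nat.dvd_lcm_right _ _)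
  have hsW : s * n 1 ≤ W := (Nat.mul_le_mul_left s hlcm).trans hs
  have hcomp : homogeneousComponent (W - s * n 1) (aeval p ((pderiv 1)^[s] G)) ≠ 0 := by
    rw [homogeneousComponent_aeval (n := n) (fun _ ↦ le_rfl)
        (weightedTotalDegree_iterate_pderiv_le n 1 s G),
      weightedHomogeneousComponent_iterate_pderiv, Nat.sub_add_cancel hsW]
    intro h
    have heval := congrArg (aeval (R := K) y) h
    rw [comp_aeval_apply, map_zero] at heval
    exact hsy heval
  refine ⟨s, hs, fun h ↦ hcomp (by rw [h, map_zero]), ?_⟩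
  by_contra! hlt
  exact hcomp (homogeneousComponent_eq_zero _ _ (Nat.lt_sub_of_add_lt hlt))

lemma exists_weightedTotalDegree_add_le {p : Fin 2 → MvPolynomial (Fin 2) K}
    (hp : jacobian (p 0) (p 1) ≠ 0) {G : MvPolynomial (Fin 2) K} (hG : G ≠ 0) :
    ∃ s, s * (p 0).totalDegree.lcm (p 1).totalDegree ≤
        weightedTotalDegree (fun i ↦ (p i).totalDegree) G ∧
      weightedTotalDegree (fun i ↦ (p i).totalDegree) G +
          s * ((jacobian (p 0) (p 1)).totalDegree + 2) ≤
        (aeval p G).totalDegree + s * ((p 0).totalDegree + (p 1).totalDegree) := by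
  have hpos (i : Fin 2) := (forall_totalDegree_pos_of_jacobian_ne_zero hp i).ne'
  obtain ⟨s, hs, hne, hle⟩ := exists_aeval_iterate_pderiv_ne_zero hpos hG
  have hdeg := totalDegree_aeval_iterate_pderiv_add_le hp hne
  exact ⟨s, hs, by lia⟩

end DegreeInequality

section PlaneReduction

variable {K : Type*} [Field K]

lemma isUnit_jacobian_of_surjective {R : Type*} [CommRing R] {p : Fin 2 → MvPolynomial (Fin 2) R}
    (hp : Function.Surjective (aeval (R := R) p)) : IsUnit (jacobian (p 0) (p 1)) := by
  obtain ⟨G, hG⟩ := hp (X 0)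
  obtain ⟨H, hH⟩ := hp (X 1)
  refine IsUnit.of_mul_eq_one_right (aeval p (jacobian G H)) ?_
  rw [← jacobian_aeval_aeval, hG, hH, jacobian_X_X]

lemma two_mul_le_lcm_of_not_dvd {m n : ℕ} (hm : m ≠ 0) (hn : n ≠ 0) (h : ¬n ∣ m) :
    2 * m ≤ m.lcm n := by
  obtain ⟨k, hk⟩ := Nat.dvd_lcm_left m n
  have hk0 : k ≠ 0 := fun h0 ↦ Nat.lcm_ne_zero hm hn (by rw [hk, h0, mul_zero])
  have hk1 : k ≠ 1 := fun h1 ↦ h (by simpa [hk, h1] using Nat.dvd_lcm_right m n)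
  rw [hk, mul_comm 2]
  exact Nat.mul_le_mul_left m (by lia)

lemma eq_C_of_weightedTotalDegree_le_one {σ R : Type*} [CommSemiring R] {n : σ → ℕ}
    (hn : ∀ i, 2 ≤ n i) {G : MvPolynomial σ R} (hG : weightedTotalDegree n G ≤ 1) :
    ∃ c, G = C c := by
  refine ⟨_, totalDegree_eq_zero_iff_eq_C.1 ((totalDegree_eq_zero_iff _ _).2 fun s hs i ↦ ?_)⟩
  by_contra hsi
  have hle := (Finsupp.le_weight_of_ne_zero' n hsi).trans (le_weightedTotalDegree n hs)
  exact absurd (hle.trans hG) (Nat.not_le_of_gt (hn i))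

variable [CharZero K] {p : Fin 2 → MvPolynomial (Fin 2) K}

lemma totalDegree_dvd_or_dvd_of_surjective (hp : Function.Surjective (aeval (R := K) p)) :
    (p 0).totalDegree ∣ (p 1).totalDegree ∨ (p 1).totalDegree ∣ (p 0).totalDegree := by
  by_contra! hdvd
  have hunit := isUnit_jacobian_of_surjective hp
  have hpos : ∀ i, (p i).totalDegree ≠ 0 := Fin.forall_fin_two.2
    ⟨fun h ↦ hdvd.2 (by simp [h]), fun h ↦ hdvd.1 (by simp [h])⟩
  have htwo : ∀ i, 2 ≤ (p i).totalDegree := by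
    have hone : ∀ i, (p i).totalDegree ≠ 1 := Fin.forall_fin_two.2
      ⟨fun h ↦ hdvd.1 (by simp [h]), fun h ↦ hdvd.2 (by simp [h])⟩
    exact fun i ↦ (Nat.two_le_iff _).2 ⟨hpos i, hone i⟩
  obtain ⟨G, hG⟩ := hp (X 0)
  have hG0 : G ≠ 0 := by
    rintro rfl
    exact X_ne_zero 0 (hG.symm.trans (map_zero _))
  obtain ⟨s, hs, hle⟩ := exists_weightedTotalDegree_add_le hunit.ne_zero hG0
  have hlcm₀ := two_mul_le_lcm_of_not_dvd (hpos 0) (hpos 1) hdvd.2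
  have hlcm₁ := two_mul_le_lcm_of_not_dvd (hpos 1) (hpos 0) hdvd.1
  rw [Nat.lcm_comm] at hlcm₁
  rw [hG, totalDegree_X, (isUnit_iff_totalDegree_of_isReduced.1 hunit).2] at hle
  have hsum : s * ((p 0).totalDegree + (p 1).totalDegree) ≤
      s * (p 0).totalDegree.lcm (p 1).totalDegree :=
    Nat.mul_le_mul_left s (by lia)
  have hs0 : s = 0 := by lia
  subst hs0
  obtain ⟨c, rfl⟩ := eq_C_of_weightedTotalDegree_le_one htwo (G := G) (by lia)
  rw [algHom_C, algebraMap_eq] at hG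
  simpa using congrArg totalDegree hG

lemma exists_totalDegree_sub_lt_of_surjective (hp : Function.Surjective (aeval (R := K) p))
    {l : Fin 2} (hl : 1 < (p l).totalDegree) :
    ∃ i j, i ≠ j ∧ ∃ (c : K) (k : ℕ), (p i - C c * p j ^ k).totalDegree < (p i).totalDegree := by
  have hunit := isUnit_jacobian_of_surjective hp
  have hunit' : IsUnit (jacobian (p 1) (p 0)) := by
    rw [jacobian_swap]
    exact hunit.neg
  have hpos := forall_totalDegree_pos_of_jacobian_ne_zero hunit.ne_zero
  have hdeg : 2 < (p 0).totalDegree + (p 1).totalDegree := by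
    have h0 := hpos 0
    have h1 := hpos 1
    obtain rfl | rfl := Fin.exists_fin_two.1 ⟨l, rfl⟩ <;> lia
  obtain h | h := totalDegree_dvd_or_dvd_of_surjective hp
  · refine ⟨1, 0, by decide, exists_totalDegree_sub_C_mul_pow_lt (hpos 1).ne' h ?_⟩
    rw [(isUnit_iff_totalDegree_of_isReduced.1 hunit').2]
    lia
  · refine ⟨0, 1, by decide, exists_totalDegree_sub_C_mul_pow_lt (hpos 0).ne' h ?_⟩
    rw [(isUnit_iff_totalDegree_of_isReduced.1 hunit).2]
    lia

end PlaneReduction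

section TriangularAutomorphism

variable {σ R : Type*} [CommRing R]

lemma aeval_update_of_notMem_vars [DecidableEq σ] {i : σ} {F : MvPolynomial σ R} (hF : i ∉ F.vars)
    (P : MvPolynomial σ R) : aeval (Function.update X i P) F = F :=
  hom_congr_vars (f₁ := (aeval (Function.update X i P)).toRingHom) (f₂ := RingHom.id _)
    (by ext; simp)
    (fun j hj _ ↦ by simp [Function.update_of_ne (ne_of_mem_of_not_mem hj hF)]) rfl

/-- The triangular automorphism `X i ↦ u X i + F`, fixing the other variables, for a unit `u` and a
polynomial `F` not involving `X i`. -/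
noncomputable def triangularAut [DecidableEq σ] (i : σ) (u : Rˣ) (F : MvPolynomial σ R)
    (hF : i ∉ F.vars) : MvPolynomial σ R ≃ₐ[R] MvPolynomial σ R :=
  AlgEquiv.ofAlgHom (aeval (Function.update X i (C (u : R) * X i + F)))
    (aeval (Function.update X i (C (↑u⁻¹ : R) * (X i - F))))
    (algHom_ext fun j ↦ by
      obtain rfl | hj := eq_or_ne j i
      · simp [-aeval_eq_bind₁, aeval_update_of_notMem_vars hF, algHom_C, ← mul_assoc, ← C_mul]
      · simp [hj])
    (algHom_ext fun j ↦ by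
      obtain rfl | hj := eq_or_ne j i
      · simp [-aeval_eq_bind₁, aeval_update_of_notMem_vars hF, algHom_C, ← mul_assoc, ← C_mul]
      · simp [hj])

lemma triangularAut_X_self [DecidableEq σ] (i : σ) (u : Rˣ) {F : MvPolynomial σ R}
    (hF : i ∉ F.vars) : triangularAut i u F hF (X i) = C (u : R) * X i + F := by
  simp [triangularAut]

lemma triangularAut_X_of_ne [DecidableEq σ] {i j : σ} (hj : j ≠ i) (u : Rˣ) {F : MvPolynomial σ R}
    (hF : i ∉ F.vars) : triangularAut i u F hF (X j) = X j := by
  simp [triangularAut, hj]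

lemma triangularAut_apply_of_notMem_vars [DecidableEq σ] {i : σ} (u : Rˣ) {F G : MvPolynomial σ R}
    (hF : i ∉ F.vars) (hG : i ∉ G.vars) : triangularAut i u F hF G = G :=
  aeval_update_of_notMem_vars hG _

lemma algEquiv_apply_eq_aeval (φ : MvPolynomial σ R ≃ₐ[R] MvPolynomial σ R)
    (P : MvPolynomial σ R) : φ P = aeval (fun l ↦ φ (X l)) P :=
  DFunLike.congr_fun (aeval_unique (φ : MvPolynomial σ R →ₐ[R] MvPolynomial σ R)) P

lemma algEquiv_ext {φ ψ : MvPolynomial σ R ≃ₐ[R] MvPolynomial σ R}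
    (h : ∀ l, φ (X l) = ψ (X l)) : φ = ψ :=
  AlgEquiv.ext fun P ↦ by rw [algEquiv_apply_eq_aeval φ, algEquiv_apply_eq_aeval ψ, funext h]

lemma algEquiv_C (φ : MvPolynomial σ R ≃ₐ[R] MvPolynomial σ R) (r : R) : φ (C r) = C r :=
  φ.commutes r

lemma exists_eq_sum_C_mul_X_of_isHomogeneous_one [Fintype σ] {P : MvPolynomial σ R}
    (hP : P.IsHomogeneous 1) : ∃ c : σ → R, P = ∑ j, C (c j) * X j := by
  rw [← mem_homogeneousSubmodule, homogeneousSubmodule_one_eq_span_X,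
    Submodule.mem_span_range_iff_exists_fun] at hP
  obtain ⟨c, rfl⟩ := hP
  exact ⟨c, by simp only [smul_eq_C_mul]⟩

lemma eq_C_add_homogeneousComponent_one {P : MvPolynomial σ R} (hP : P.totalDegree ≤ 1) :
    P = C (coeff 0 P) + homogeneousComponent 1 P := by
  conv_lhs => rw [← sum_homogeneousComponent P,
    Finset.sum_subset (Finset.range_subset_range.2 (Nat.succ_le_succ hP)) fun n _ hn ↦
      homogeneousComponent_eq_zero _ _ (by simpa using hn)]
  simp [Finset.sum_range_succ]

lemma X_dvd_of_isWeightedHomogeneous {M : Type*} [AddCommMonoid M] {w : σ → M} {m : M} {k : σ}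
    (hk : ∀ s : σ →₀ ℕ, Finsupp.weight w s = m → s k ≠ 0) {P : MvPolynomial σ R}
    (hP : P.IsWeightedHomogeneous w m) : X k ∣ P := by
  rw [P.as_sum]
  exact Finset.dvd_sum fun s hs ↦ X_dvd_monomial.2 (.inr (hk s (hP (mem_support_iff.1 hs))))

variable [IsDomain R]

lemma algEquiv_X_eq_C_mul_of_dvd {φ : MvPolynomial σ R ≃ₐ[R] MvPolynomial σ R} {k : σ}
    (h : X k ∣ φ (X k)) : ∃ v : Rˣ, φ (X k) = C (v : R) * X k := by
  have hX : Irreducible (X k : MvPolynomial σ R) := X_prime.irreducible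
  obtain ⟨U, hU⟩ := (hX.dvd_irreducible_iff_associated ((MulEquiv.irreducible_iff φ).2 hX)).1 h
  obtain ⟨_, ⟨v, rfl⟩, hv⟩ := isUnit_iff_eq_C_of_isReduced.1 U.isUnit
  exact ⟨v, by rw [← hU, hv, mul_comm]⟩

variable [CharZero R]

lemma notMem_vars_of_pderiv_eq_zero {i : σ} {P : MvPolynomial σ R} (h : pderiv i P = 0) :
    i ∉ P.vars := by
  classical
  intro hi
  obtain ⟨s, hs, hsi⟩ := (mem_vars_iff_mem_support i).1 hi
  have hle : Finsupp.single i 1 ≤ s :=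
    Finsupp.single_le_iff.2 (Nat.one_le_iff_ne_zero.2 (Finsupp.mem_support_iff.1 hsi))
  have hcoeff := coeff_pderiv (i := i) P (s - Finsupp.single i 1)
  rw [h, coeff_zero, tsub_add_cancel_of_le hle] at hcoeff
  exact mul_ne_zero (mem_support_iff.1 hs) (Nat.cast_add_one_ne_zero _) hcoeff.symm

lemma exists_algEquiv_X_eq_C_mul_X_add [Finite σ] {φ : MvPolynomial σ R ≃ₐ[R] MvPolynomial σ R}
    {i : σ} (h : ∀ l ≠ i, pderiv l (φ.symm (X i)) = 0 ∨ pderiv i (φ (X l)) = 0) :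
    ∃ (u : Rˣ) (F : MvPolynomial σ R), i ∉ F.vars ∧ φ (X i) = C (u : R) * X i + F := by
  classical
  have := Fintype.ofFinite σ
  have hchain : φ (pderiv i (φ.symm (X i))) * pderiv i (φ (X i)) = 1 := by
    have hsum := derivation_aeval (pderiv i) (fun l ↦ φ (X l)) (φ.symm (X i))
    simp only [← algEquiv_apply_eq_aeval, AlgEquiv.apply_symm_apply, pderiv_X_self,
      smul_eq_mul] at hsum
    rw [hsum, Finset.sum_eq_single i (fun l _ hl ↦ ?_) (by simp)]
    obtain h | h := h l hl <;> simp [h]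
  obtain ⟨_, ⟨u, rfl⟩, hu⟩ := isUnit_iff_eq_C_of_isReduced.1 (IsUnit.of_mul_eq_one_right _ hchain)
  refine ⟨u, φ (X i) - C (u : R) * X i, notMem_vars_of_pderiv_eq_zero ?_, by ring⟩
  rw [map_sub, hu, pderiv_C_mul, pderiv_X_self, mul_one, sub_self]

end TriangularAutomorphism

section GradedAutomorphism

variable {K : Type*} [CommRing K] {w : Fin 3 → ℤ}
  {φ ψ : MvPolynomial (Fin 3) K ≃ₐ[K] MvPolynomial (Fin 3) K}

lemma isGraded_of_apply_X (h : ∀ i, (φ (X i)).IsWeightedHomogeneous w (w i)) : IsGraded w φ := by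
  intro d P hP
  rw [P.as_sum, map_sum]
  refine IsWeightedHomogeneous.sum _ _ _ fun s hs ↦ ?_
  rw [← hP (mem_support_iff.1 hs), Finsupp.weight_apply, monomial_eq, map_mul, algEquiv_C,
    Finsupp.prod, map_prod]
  refine (IsWeightedHomogeneous.prod _ _ _ fun i _ ↦ ?_).C_mul _
  rw [map_pow]
  exact (h i).pow _

lemma _root_.IsGraded.apply_X (hφ : IsGraded w φ) (i : Fin 3) :
    (φ (X i)).IsWeightedHomogeneous w (w i) :=
  hφ _ _ (isWeightedHomogeneous_X K w i)

lemma _root_.IsGraded.mul (hφ : IsGraded w φ) (hψ : IsGraded w ψ) : IsGraded w (φ * ψ) :=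
  fun d P hP ↦ hφ d _ (hψ d P hP)

lemma _root_.IsGraded.weightedHomogeneousComponent_apply (hφ : IsGraded w φ) (d : ℤ)
    (P : MvPolynomial (Fin 3) K) :
    weightedHomogeneousComponent w d (φ P) = φ (weightedHomogeneousComponent w d P) := by
  induction P using MvPolynomial.induction_on' with
  | monomial s c =>
    have hs := isWeightedHomogeneous_monomial w s c rfl
    rw [weightedHomogeneousComponent_of_mem (hφ _ _ hs), weightedHomogeneousComponent_of_mem hs]
    split_ifs <;> simp
  | add P Q hP hQ => simp only [map_add, hP, hQ]

lemma _root_.IsGraded.symm (hφ : IsGraded w φ) : IsGraded w φ.symm := by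
  intro d P hP
  have hcomp : φ (weightedHomogeneousComponent w d (φ.symm P)) = P := by
    rw [← hφ.weightedHomogeneousComponent_apply, AlgEquiv.apply_symm_apply,
      hP.weightedHomogeneousComponent_same]
  rw [← hcomp, AlgEquiv.symm_apply_apply]
  exact weightedHomogeneousComponent_isWeightedHomogeneous _ _

lemma isGraded_triangularAut {i : Fin 3} (u : Kˣ) {F : MvPolynomial (Fin 3) K} (hF : i ∉ F.vars)
    (hFw : F.IsWeightedHomogeneous w (w i)) : IsGraded w (triangularAut i u F hF) := by
  refine isGraded_of_apply_X fun j ↦ ?_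
  obtain rfl | hj := eq_or_ne j i
  · rw [triangularAut_X_self]
    exact ((isWeightedHomogeneous_X K w j).C_mul _).add hFw
  · rw [triangularAut_X_of_ne hj]
    exact isWeightedHomogeneous_X K w j

lemma isLinearAut_of_isHomogeneous_one (h : ∀ i, (φ (X i)).IsHomogeneous 1) : IsLinearAut φ :=
  fun i ↦ exists_eq_sum_C_mul_X_of_isHomogeneous_one (h i)

lemma _root_.IsGraded.isGradedTame (hφ : IsGraded w φ) (h : IsElementary φ ∨ IsLinearAut φ) :
    IsGradedTame w φ :=
  ⟨[φ], by simpa using ⟨hφ, h⟩, List.prod_singleton.symm⟩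

lemma _root_.IsGradedTame.mul (hφ : IsGradedTame w φ) (hψ : IsGradedTame w ψ) :
    IsGradedTame w (φ * ψ) := by
  obtain ⟨l, hl, rfl⟩ := hφ
  obtain ⟨m, hm, rfl⟩ := hψ
  exact ⟨l ++ m, List.forall_mem_append.2 ⟨hl, hm⟩, List.prod_append.symm⟩

variable [IsDomain K]

lemma _root_.IsGraded.exists_apply_X_eq_C_mul (hφ : IsGraded w φ) {k : Fin 3}
    (hk : ∀ s : Fin 3 →₀ ℕ, Finsupp.weight w s = w k → s k ≠ 0) :
    ∃ v : Kˣ, φ (X k) = C (v : K) * X k :=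
  algEquiv_X_eq_C_mul_of_dvd (X_dvd_of_isWeightedHomogeneous hk (hφ.apply_X k))

variable [CharZero K]

lemma _root_.IsGraded.isGradedTame_of_forall_apply_X_eq_X (hφ : IsGraded w φ) (i : Fin 3)
    (h : ∀ j ≠ i, φ (X j) = X j) : IsGradedTame w φ := by
  obtain ⟨u, F, hF, hφi⟩ := exists_algEquiv_X_eq_C_mul_X_add (φ := φ) (i := i)
    fun l hl ↦ .inr (by rw [h l hl, pderiv_X_of_ne hl])
  have hFw : F.IsWeightedHomogeneous w (w i) := by
    rw [← sub_eq_of_eq_add' hφi]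
    exact (hφ.apply_X i).sub ((isWeightedHomogeneous_X K w i).C_mul _)
  have h0 : i ∉ (0 : MvPolynomial (Fin 3) K).vars := by simp
  have hfactor : φ = triangularAut i u 0 h0 * triangularAut i 1 F hF := algEquiv_ext fun j ↦ by
    rw [AlgEquiv.mul_apply]
    obtain rfl | hj := eq_or_ne j i
    · simp [triangularAut_X_self, triangularAut_apply_of_notMem_vars _ h0 hF, hφi]
    · simp only [triangularAut_X_of_ne hj, h j hj]
  rw [hfactor]
  refine ((isGraded_triangularAut u h0 (isWeightedHomogeneous_zero K w _)).isGradedTame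
    (.inr (isLinearAut_of_isHomogeneous_one fun j ↦ ?_))).mul
    ((isGraded_triangularAut 1 hF hFw).isGradedTame
      (.inl ⟨i, F, hF, by simp [triangularAut_X_self], fun j hj ↦ triangularAut_X_of_ne hj _ _⟩))
  obtain rfl | hj := eq_or_ne j i
  · rw [triangularAut_X_self, add_zero]
    exact isHomogeneous_C_mul_X _ _
  · rw [triangularAut_X_of_ne hj]
    exact isHomogeneous_X K j

lemma _root_.IsGraded.exists_mul_triangularAut (hφ : IsGraded w φ) {i : Fin 3} (u : Kˣ)
    {F : MvPolynomial (Fin 3) K} (hF : i ∉ F.vars) (hFw : F.IsWeightedHomogeneous w (w i)) :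
    ∃ ψ : MvPolynomial (Fin 3) K ≃ₐ[K] MvPolynomial (Fin 3) K, IsGraded w ψ ∧
      ψ (X i) = C (u : K) * φ (X i) + φ F ∧ (∀ j ≠ i, ψ (X j) = φ (X j)) ∧
      (IsGradedTame w ψ → IsGradedTame w φ) := by
  have hgraded := isGraded_triangularAut u hF hFw
  refine ⟨φ * triangularAut i u F hF, hφ.mul hgraded, ?_, fun j hj ↦ ?_, fun htame ↦ ?_⟩
  · rw [AlgEquiv.mul_apply, triangularAut_X_self, map_add, map_mul, algEquiv_C]
  · rw [AlgEquiv.mul_apply, triangularAut_X_of_ne hj]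
  · have hinv : IsGradedTame w (triangularAut i u F hF).symm :=
      hgraded.symm.isGradedTame_of_forall_apply_X_eq_X i fun j hj ↦ by
        rw [AlgEquiv.symm_apply_eq, triangularAut_X_of_ne hj]
    have h := htame.mul hinv
    rwa [← AlgEquiv.aut_inv, mul_inv_cancel_right] at h

lemma _root_.IsGraded.exists_apply_X_eq_X (hφ : IsGraded w φ) {k : Fin 3} {v : Kˣ} {r : K}
    (h : φ (X k) = C (v : K) * X k + C r) :
    ∃ ψ : MvPolynomial (Fin 3) K ≃ₐ[K] MvPolynomial (Fin 3) K, IsGraded w ψ ∧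
      ψ (X k) = X k ∧ (∀ j ≠ k, ψ (X j) = φ (X j)) ∧
      (IsGradedTame w ψ → IsGradedTame w φ) := by
  have hrw : (C r : MvPolynomial (Fin 3) K).IsWeightedHomogeneous w (w k) := by
    rw [← sub_eq_of_eq_add' h]
    exact (hφ.apply_X k).sub ((isWeightedHomogeneous_X K w k).C_mul _)
  obtain ⟨ψ, hψ, hψk, hψj, htame⟩ := hφ.exists_mul_triangularAut v⁻¹
    (i := k) (F := C (-(↑v⁻¹ * r))) (by rw [vars_C]; exact Finset.notMem_empty k) (by
      rw [C_neg, C_mul]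
      exact (hrw.C_mul _).neg)
  refine ⟨ψ, hψ, ?_, hψj, htame⟩
  rw [hψk, h, algEquiv_C, C_neg, C_mul, mul_add, ← mul_assoc, ← C_mul, Units.inv_mul, C_1, one_mul,
    add_neg_cancel_right]

end GradedAutomorphism

section AffineAutomorphism

variable {K : Type*} [Field K] [CharZero K] {w : Fin 3 → ℤ}
  {φ : MvPolynomial (Fin 3) K ≃ₐ[K] MvPolynomial (Fin 3) K}

lemma _root_.IsGraded.exists_coeff_zero_eq_zero (hφ : IsGraded w φ) (i : Fin 3) :
    ∃ ψ : MvPolynomial (Fin 3) K ≃ₐ[K] MvPolynomial (Fin 3) K, IsGraded w ψ ∧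
      ψ (X i) = φ (X i) - C (coeff 0 (φ (X i))) ∧ (∀ j ≠ i, ψ (X j) = φ (X j)) ∧
      (IsGradedTame w ψ → IsGradedTame w φ) := by
  have hconst : (C (-coeff 0 (φ (X i))) : MvPolynomial (Fin 3) K).IsWeightedHomogeneous w
      (w i) := by
    obtain h0 | h0 := eq_or_ne (coeff 0 (φ (X i))) 0
    · simpa [h0] using isWeightedHomogeneous_zero K w (w i)
    · rw [← hφ.apply_X i h0, map_zero]
      exact isWeightedHomogeneous_C w _
  obtain ⟨ψ, hψ, hψi, hψj, htame⟩ := hφ.exists_mul_triangularAut 1 (by simp) hconst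
  exact ⟨ψ, hψ, by rw [hψi, algEquiv_C]; simp [sub_eq_add_neg], hψj, htame⟩

lemma _root_.IsGraded.isGradedTame_of_totalDegree_le_one (hφ : IsGraded w φ)
    (hdeg : ∀ i, (φ (X i)).totalDegree ≤ 1) : IsGradedTame w φ := by
  suffices H : ∀ (S : Finset (Fin 3)) (ψ : MvPolynomial (Fin 3) K ≃ₐ[K] MvPolynomial (Fin 3) K),
      IsGraded w ψ → (∀ i, (ψ (X i)).totalDegree ≤ 1) → (∀ i ∉ S, coeff 0 (ψ (X i)) = 0) →
      IsGradedTame w ψ from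
    H Finset.univ φ hφ hdeg fun i hi ↦ absurd (Finset.mem_univ i) hi
  intro S
  induction S using Finset.induction_on with
  | empty =>
    refine fun ψ hψ hdeg h0 ↦ hψ.isGradedTame (.inr (isLinearAut_of_isHomogeneous_one fun i ↦ ?_))
    rw [eq_C_add_homogeneousComponent_one (hdeg i), h0 i (Finset.notMem_empty i), C_0, zero_add]
    exact homogeneousComponent_isHomogeneous 1 _
  | insert i S _ ih =>
    intro ψ hψ hdeg h0
    obtain ⟨χ, hχ, hχi, hχj, htame⟩ := hψ.exists_coeff_zero_eq_zero i
    refine htame (ih χ hχ (fun j ↦ ?_) fun j hj ↦ ?_)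
    · obtain rfl | hji := eq_or_ne j i
      · rw [hχi]
        exact (totalDegree_sub_C_le _ _).trans (hdeg j)
      · rw [hχj j hji]
        exact hdeg j
    · obtain rfl | hji := eq_or_ne j i
      · rw [hχi, coeff_sub, coeff_zero_C, sub_self]
      · rw [hχj j hji]
        exact h0 j (by simp [hji, hj])

lemma _root_.IsGraded.isGradedTame_of_apply_X_eq_C_mul_X_add_C (hφ : IsGraded w φ) {j k : Fin 3}
    (hjk : j ≠ k) {v v' : Kˣ} {r r' : K} (hj : φ (X j) = C (v : K) * X j + C r)
    (hk : φ (X k) = C (v' : K) * X k + C r') : IsGradedTame w φ := by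
  obtain ⟨ψ, hψ, hψj, hψ_ne, htameφ⟩ := hφ.exists_apply_X_eq_X hj
  obtain ⟨χ, hχ, hχk, hχ_ne, htameψ⟩ := hψ.exists_apply_X_eq_X ((hψ_ne k hjk.symm).trans hk)
  obtain ⟨i, hi⟩ : ∃ i, ∀ l ≠ i, l = j ∨ l = k := by
    clear * - hjk
    decide +revert
  refine htameφ (htameψ (hχ.isGradedTame_of_forall_apply_X_eq_X i fun l hl ↦ ?_))
  obtain rfl | rfl := hi l hl
  · rw [hχ_ne l hjk, hψj]
  · exact hχk

end AffineAutomorphism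

section ZeroWeight

lemma univ_eq_of_ne {i j k : Fin 3} (hij : i ≠ j) (hik : i ≠ k) (hjk : j ≠ k) :
    (Finset.univ : Finset (Fin 3)) = {i, j, k} := by
  decide +revert

variable {i j k : Fin 3} {w : Fin 3 → ℤ}

lemma weight_eq_add_add (hij : i ≠ j) (hik : i ≠ k) (hjk : j ≠ k) (s : Fin 3 →₀ ℕ) :
    Finsupp.weight w s = s i * w i + s j * w j + s k * w k := by
  rw [Finsupp.weight_eq_sum, univ_eq_of_ne hij hik hjk, Finset.sum_insert (by simp [hij, hik]),
    Finset.sum_pair hjk, add_assoc]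
  simp only [nsmul_eq_mul]

variable {K : Type*} [CommRing K] {φ : MvPolynomial (Fin 3) K ≃ₐ[K] MvPolynomial (Fin 3) K}

lemma notMem_vars_of_isWeightedHomogeneous_zero (hij : i ≠ j) (hik : i ≠ k) (hjk : j ≠ k)
    (hi : w i = 0) (hw : 0 < w j * w k) {P : MvPolynomial (Fin 3) K}
    (hP : P.IsWeightedHomogeneous w 0) : j ∉ P.vars := by
  rw [mem_vars_iff_mem_support]
  rintro ⟨s, hs, hsj⟩
  have h0 := hP (mem_support_iff.1 hs)
  rw [weight_eq_add_add hij hik hjk, hi, mul_zero, zero_add] at h0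
  have hsum : (s j : ℤ) * (w j * w j) + s k * (w j * w k) = 0 := by linear_combination w j * h0
  have hpos : 0 < (s j : ℤ) * (w j * w j) :=
    mul_pos (by exact_mod_cast (Finsupp.mem_support_iff.1 hsj).bot_lt)
      (mul_self_pos.2 (left_ne_zero_of_mul hw.ne'))
  have hnonneg : 0 ≤ (s k : ℤ) * (w j * w k) := by positivity
  lia

lemma exists_eq_aeval_mul_X_add_aeval_mul_X (hij : i ≠ j) (hik : i ≠ k) (hjk : j ≠ k)
    (hi : w i = 0) (hw : w j = w k) (hk : w k ≠ 0) {P : MvPolynomial (Fin 3) K}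
    (hP : P.IsWeightedHomogeneous w (w k)) :
    ∃ A B : Polynomial K,
      P = Polynomial.aeval (X i) A * X j + Polynomial.aeval (X i) B * X k := by
  rw [P.as_sum]
  refine Finset.sum_induction _ (fun Q : MvPolynomial (Fin 3) K ↦ ∃ A B : Polynomial K,
    Q = Polynomial.aeval (X i) A * X j + Polynomial.aeval (X i) B * X k) ?_ ⟨0, 0, by simp⟩
    fun s hs ↦ ?_
  · rintro _ _ ⟨A, B, rfl⟩ ⟨A', B', rfl⟩
    exact ⟨A + A', B + B', by rw [map_add, map_add]; ring⟩
  · have hdeg : s j + s k = 1 := by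
      have h := hP (mem_support_iff.1 hs)
      rw [weight_eq_add_add hij hik hjk, hi, hw] at h
      have : ((s j + s k : ℕ) : ℤ) = 1 := mul_right_cancel₀ hk (by push_cast; linear_combination h)
      exact_mod_cast this
    have hmon : monomial s (coeff s P) = C (coeff s P) * X i ^ s i * X j ^ s j * X k ^ s k := by
      rw [monomial_eq, Finsupp.prod_fintype _ _ fun _ ↦ pow_zero _, univ_eq_of_ne hij hik hjk,
        Finset.prod_insert (by simp [hij, hik]), Finset.prod_pair hjk]
      ring
    obtain ⟨hj, hk⟩ | ⟨hj, hk⟩ : (s j = 1 ∧ s k = 0) ∨ (s j = 0 ∧ s k = 1) := by lia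
    · exact ⟨Polynomial.monomial (s i) (coeff s P), 0, by
        simp [hmon, hj, hk, Polynomial.aeval_monomial, algebraMap_eq]⟩
    · exact ⟨0, Polynomial.monomial (s i) (coeff s P), by
        simp [hmon, hj, hk, Polynomial.aeval_monomial, algebraMap_eq]⟩

variable [IsDomain K]

lemma _root_.IsGraded.exists_apply_X_eq_C_mul_of_forall_mul_ne (hφ : IsGraded w φ) (hij : i ≠ j)
    (hik : i ≠ k) (hjk : j ≠ k) (hi : w i = 0) (hne : ∀ n : ℕ, n * w k ≠ w j) :
    ∃ v : Kˣ, φ (X j) = C (v : K) * X j :=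
  hφ.exists_apply_X_eq_C_mul fun s hs hsj ↦ hne (s k) <| by
    rw [← hs, weight_eq_add_add hij hik hjk, hi, hsj]
    simp

lemma _root_.IsGraded.exists_apply_X_eq_C_mul_X_add_C [CharZero K] (hφ : IsGraded w φ)
    (hij : i ≠ j) (hik : i ≠ k) (hjk : j ≠ k) (hi : w i = 0) (hw : 0 < w j * w k) :
    ∃ (v : Kˣ) (r : K), φ (X i) = C (v : K) * X i + C r := by
  have hvars {P : MvPolynomial (Fin 3) K} (hP : P.IsWeightedHomogeneous w (w i)) :
      ∀ l ≠ i, l ∉ P.vars := by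
    rw [hi] at hP
    intro l hl
    obtain rfl | rfl : l = j ∨ l = k := by
      simpa [univ_eq_of_ne hij hik hjk, hl] using Finset.mem_univ l
    · exact notMem_vars_of_isWeightedHomogeneous_zero hij hik hjk hi hw hP
    · exact notMem_vars_of_isWeightedHomogeneous_zero hik hij hjk.symm hi (mul_comm (w j) _ ▸ hw) hP
  obtain ⟨v, F, hF, hφi⟩ := exists_algEquiv_X_eq_C_mul_X_add (φ := φ) (i := i) fun l hl ↦
    .inl (pderiv_eq_zero_of_notMem_vars (hvars (hφ.symm.apply_X i) l hl))
  have hFw : F.IsWeightedHomogeneous w (w i) := by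
    rw [← sub_eq_of_eq_add' hφi]
    exact (hφ.apply_X i).sub ((isWeightedHomogeneous_X K w i).C_mul _)
  have hFvars : F.vars = ∅ := Finset.eq_empty_of_forall_notMem fun l ↦ by
    obtain rfl | hl := eq_or_ne l i
    · exact hF
    · exact hvars hFw l hl
  exact ⟨v, coeff 0 F, by rw [hφi, ← vars_eq_empty_iff_eq_C.1 hFvars]⟩

end ZeroWeight

section EqualWeights

lemma isUnit_of_irreducible_aeval_mul_X {σ R : Type*} [CommRing R] [IsDomain R] {i l : σ}
    {p : Polynomial R}
    (h : Irreducible (Polynomial.aeval (X i : MvPolynomial σ R) p * X l)) : IsUnit p := by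
  have hunit := (h.isUnit_or_isUnit rfl).resolve_right X_prime.not_isUnit
  simpa [← Polynomial.aeval_algHom_apply] using
    hunit.map (aeval (R := R) fun _ : σ ↦ (Polynomial.X : Polynomial R))

variable {K : Type*} [Field K] [CharZero K] {i j k : Fin 3} {w : Fin 3 → ℤ}
  {φ : MvPolynomial (Fin 3) K ≃ₐ[K] MvPolynomial (Fin 3) K}

lemma _root_.IsGraded.exists_apply_X_eq_sub_aeval_mul (hφ : IsGraded w φ) (hij : i ≠ j)
    (hjk : j ≠ k) (hi : w i = 0) (hw : w j = w k) (hφi : φ (X i) = X i) (q : Polynomial K) :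
    ∃ ψ : MvPolynomial (Fin 3) K ≃ₐ[K] MvPolynomial (Fin 3) K, IsGraded w ψ ∧
      ψ (X j) = φ (X j) - Polynomial.aeval (X i) q * φ (X k) ∧ (∀ l ≠ j, ψ (X l) = φ (X l)) ∧
      (IsGradedTame w ψ → IsGradedTame w φ) := by
  have hvars : j ∉ (-(Polynomial.aeval (X i) q * X k) : MvPolynomial (Fin 3) K).vars := by
    refine notMem_vars_of_pderiv_eq_zero ?_
    simp [Derivation.map_aeval, pderiv_X_of_ne hij, pderiv_X_of_ne hjk.symm]
  have hq : (Polynomial.aeval (X i : MvPolynomial (Fin 3) K) q).IsWeightedHomogeneous w 0 := by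
    rw [Polynomial.aeval_eq_sum_range]
    refine IsWeightedHomogeneous.sum _ _ _ fun n _ ↦ ?_
    rw [smul_eq_C_mul]
    simpa [hi] using ((isWeightedHomogeneous_X K w i).pow n).C_mul (q.coeff n)
  have hmul := (hq.mul (isWeightedHomogeneous_X K w k)).neg
  rw [zero_add, ← hw] at hmul
  obtain ⟨ψ, hψ, hψj, hψl, htame⟩ := hφ.exists_mul_triangularAut 1 hvars hmul
  refine ⟨ψ, hψ, ?_, hψl, htame⟩
  rw [hψj, Units.val_one, C_1, one_mul, map_neg, map_mul, ← Polynomial.aeval_algHom_apply, hφi,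
    sub_eq_add_neg]

lemma _root_.IsGraded.isGradedTame_of_apply_X_eq_aeval_mul_X (hφ : IsGraded w φ) (hij : i ≠ j)
    (hik : i ≠ k) (hjk : j ≠ k) (hi : w i = 0) (hw : w j = w k) (hφi : φ (X i) = X i) {l m : Fin 3}
    {A B D : Polynomial K}
    (hφj : φ (X j) = Polynomial.aeval (X i) A * X l + Polynomial.aeval (X i) B * X m)
    (hφk : φ (X k) = Polynomial.aeval (X i) D * X m) : IsGradedTame w φ := by
  obtain ⟨δ, hδ, rfl⟩ := Polynomial.isUnit_iff.1 <| isUnit_of_irreducible_aeval_mul_X <|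
    hφk ▸ (MulEquiv.irreducible_iff φ).2 X_prime.irreducible
  obtain ⟨ψ, hψ, hψj, hψ_ne, htame⟩ :=
    hφ.exists_apply_X_eq_sub_aeval_mul hij hjk hi hw hφi (B * Polynomial.C δ⁻¹)
  have hψj' : ψ (X j) = Polynomial.aeval (X i) A * X l := by
    have hCδ : (C δ⁻¹ * C δ : MvPolynomial (Fin 3) K) = 1 := by
      rw [← C_mul, inv_mul_cancel₀ hδ.ne_zero, C_1]
    rw [hψj, hφj, hφk, map_mul, Polynomial.aeval_C, Polynomial.aeval_C, algebraMap_eq]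
    linear_combination (-Polynomial.aeval (X i) B * X m) * hCδ
  obtain ⟨α, -, rfl⟩ := Polynomial.isUnit_iff.1 <| isUnit_of_irreducible_aeval_mul_X <|
    hψj' ▸ (MulEquiv.irreducible_iff ψ).2 X_prime.irreducible
  refine htame (hψ.isGradedTame (.inr (isLinearAut_of_isHomogeneous_one fun n ↦ ?_)))
  obtain rfl | rfl | rfl : n = i ∨ n = j ∨ n = k := by
    simpa [univ_eq_of_ne hij hik hjk] using Finset.mem_univ n
  · rw [hψ_ne _ hij, hφi]
    exact isHomogeneous_X K _
  · rw [hψj', Polynomial.aeval_C]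
    exact isHomogeneous_C_mul_X _ _
  · rw [hψ_ne _ hjk.symm, hφk, Polynomial.aeval_C]
    exact isHomogeneous_C_mul_X _ _

-- The Euclidean algorithm on the coefficients `c` and `a` of `X l` in the images of `X k` and
-- `X j`, whose roles are exchanged at every division.
lemma _root_.IsGraded.isGradedTame_of_apply_X_eq_aeval_mul_X_add (hφ : IsGraded w φ) (hij : i ≠ j)
    (hik : i ≠ k) (hjk : j ≠ k) (hi : w i = 0) (hw : w j = w k) (hφi : φ (X i) = X i) {l m : Fin 3}
    {a b c d : Polynomial K}
    (hφj : φ (X j) = Polynomial.aeval (X i) a * X l + Polynomial.aeval (X i) b * X m)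
    (hφk : φ (X k) = Polynomial.aeval (X i) c * X l + Polynomial.aeval (X i) d * X m) :
    IsGradedTame w φ := by
  classical
  induction c, a using EuclideanDomain.GCD.induction generalizing φ j k b d with
  | H0 a =>
    rw [map_zero, zero_mul, zero_add] at hφk
    exact hφ.isGradedTame_of_apply_X_eq_aeval_mul_X hij hik hjk hi hw hφi hφj hφk
  | H1 c a _ ih =>
    obtain ⟨ψ, hψ, hψj, hψ_ne, htame⟩ :=
      hφ.exists_apply_X_eq_sub_aeval_mul hij hjk hi hw hφi (a / c)
    refine htame (ih hψ hik hij hjk.symm hw.symm ((hψ_ne i hij).trans hφi)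
      ((hψ_ne k hjk.symm).trans hφk) (d := b - a / c * d) ?_)
    rw [hψj, hφj, hφk, EuclideanDomain.mod_eq_sub_mul_div]
    simp only [map_sub, map_mul]
    ring

end EqualWeights

section SameSign

variable {K : Type*} [Field K] [CharZero K] {i j k : Fin 3} {w : Fin 3 → ℤ}
  {φ : MvPolynomial (Fin 3) K ≃ₐ[K] MvPolynomial (Fin 3) K}

lemma _root_.IsGraded.isGradedTame_of_weight_eq (hφ : IsGraded w φ) (hij : i ≠ j) (hik : i ≠ k)
    (hjk : j ≠ k) (hi : w i = 0) (hw : w j = w k) (hk : w k ≠ 0) : IsGradedTame w φ := by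
  obtain ⟨v, r, hφi⟩ :=
    hφ.exists_apply_X_eq_C_mul_X_add_C hij hik hjk hi (by rw [hw]; exact mul_self_pos.2 hk)
  obtain ⟨ψ, hψ, hψi, -, htame⟩ := hφ.exists_apply_X_eq_X hφi
  obtain ⟨a, b, hψj⟩ :=
    exists_eq_aeval_mul_X_add_aeval_mul_X hij hik hjk hi hw hk (hw ▸ hψ.apply_X j)
  obtain ⟨c, d, hψk⟩ := exists_eq_aeval_mul_X_add_aeval_mul_X hij hik hjk hi hw hk (hψ.apply_X k)
  exact htame (hψ.isGradedTame_of_apply_X_eq_aeval_mul_X_add hij hik hjk hi hw hψi hψj hψk)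

lemma forall_mul_ne_or_forall_mul_ne {a b : ℤ} (hab : a ≠ b) (hb : b ≠ 0) :
    (∀ n : ℕ, n * b ≠ a) ∨ ∀ n : ℕ, n * a ≠ b := by
  by_contra! h
  obtain ⟨⟨m, rfl⟩, n, hn⟩ := h
  have hnm : ((n * m : ℕ) : ℤ) = 1 := mul_right_cancel₀ hb (by push_cast; linear_combination hn)
  obtain ⟨-, rfl⟩ := mul_eq_one.1 (Nat.cast_eq_one.1 hnm)
  simp at hab

lemma _root_.IsGraded.isGradedTame_of_weight_mul_pos (hφ : IsGraded w φ) (hij : i ≠ j) (hik : i ≠ k)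
    (hjk : j ≠ k) (hi : w i = 0) (hw : 0 < w j * w k) : IsGradedTame w φ := by
  obtain heq | hne := eq_or_ne (w j) (w k)
  · exact hφ.isGradedTame_of_weight_eq hij hik hjk hi heq (right_ne_zero_of_mul hw.ne')
  obtain ⟨v, r, hφi⟩ := hφ.exists_apply_X_eq_C_mul_X_add_C hij hik hjk hi hw
  obtain h | h := forall_mul_ne_or_forall_mul_ne hne (right_ne_zero_of_mul hw.ne')
  · obtain ⟨v', hφj⟩ := hφ.exists_apply_X_eq_C_mul_of_forall_mul_ne hij hik hjk hi h
    exact hφ.isGradedTame_of_apply_X_eq_C_mul_X_add_C hij hφi (r' := 0) (by rw [hφj, C_0, add_zero])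
  · obtain ⟨v', hφk⟩ := hφ.exists_apply_X_eq_C_mul_of_forall_mul_ne hik hij hjk.symm hi h
    exact hφ.isGradedTame_of_apply_X_eq_C_mul_X_add_C hik hφi (r' := 0) (by rw [hφk, C_0, add_zero])

lemma _root_.IsGraded.isGradedTame_of_weight_mul_neg (hφ : IsGraded w φ) (hij : i ≠ j) (hik : i ≠ k)
    (hjk : j ≠ k) (hi : w i = 0) (hw : w j * w k < 0) : IsGradedTame w φ := by
  have hmul_ne {a b : ℤ} (hab : a * b < 0) (n : ℕ) : n * b ≠ a := by
    rintro rfl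
    exact hab.not_ge (by rw [mul_assoc]; exact mul_nonneg n.cast_nonneg (mul_self_nonneg b))
  obtain ⟨v, hφj⟩ := hφ.exists_apply_X_eq_C_mul_of_forall_mul_ne hij hik hjk hi (hmul_ne hw)
  obtain ⟨v', hφk⟩ := hφ.exists_apply_X_eq_C_mul_of_forall_mul_ne hik hij hjk.symm hi
    (hmul_ne (mul_comm (w j) _ ▸ hw))
  exact hφ.isGradedTame_of_apply_X_eq_C_mul_X_add_C hjk (r := 0) (r' := 0)
    (by rw [hφj, C_0, add_zero]) (by rw [hφk, C_0, add_zero])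

end SameSign

section KillCompl

variable {σ τ R : Type*} [CommSemiring R] {e : τ → σ} (he : Function.Injective e)

lemma totalDegree_killCompl_le (P : MvPolynomial σ R) :
    (killCompl he P).totalDegree ≤ P.totalDegree :=
  Finset.sup_le fun s hs ↦ by
    have hmem : s.mapDomain e ∈ P.support := by
      rwa [mem_support_iff, coeff_killCompl, ← mem_support_iff] at hs
    simpa [Finsupp.degree, Finsupp.sum_mapDomain_index] using le_totalDegree hmem

lemma rename_killCompl_of_vars_subset {P : MvPolynomial σ R} (hP : ↑P.vars ⊆ Set.range e) :
    rename e (killCompl he P) = P := by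
  obtain ⟨Q, rfl⟩ := exists_rename_eq_of_vars_subset_range P e he hP
  rw [killCompl_rename_app]

lemma surjective_aeval_killCompl {φ : MvPolynomial σ R ≃ₐ[R] MvPolynomial σ R}
    (hφ : ∀ k ∉ Set.range e, killCompl he (φ (X k)) = 0) :
    Function.Surjective (aeval (R := R) fun a ↦ killCompl he (φ (X (e a)))) := by
  have hcomp : (aeval (R := R) fun a ↦ killCompl he (φ (X (e a)))).comp (killCompl he) =
      (killCompl he).comp φ.toAlgHom := algHom_ext fun k ↦ by
    by_cases hk : k ∈ Set.range e
    · obtain ⟨a, rfl⟩ := hk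
      simp [killCompl, -aeval_eq_bind₁]
    · have hX : killCompl he (X k : MvPolynomial σ R) = 0 := by simp [killCompl, hk]
      simp [hX, hφ k hk]
  intro Q
  refine ⟨killCompl he (φ.symm (rename e Q)), ?_⟩
  simpa [killCompl_rename_app] using AlgHom.congr_fun hcomp (φ.symm (rename e Q))

end KillCompl

section SingleWeight

lemma weight_eq_mul_of_forall_ne {σ : Type*} {k : σ} {w : σ → ℤ}
    (hw : ∀ l ≠ k, w l = 0) (s : σ →₀ ℕ) : Finsupp.weight w s = s k * w k := by
  rw [Finsupp.weight_apply, Finsupp.sum_eq_single k (fun l _ hl ↦ by rw [hw l hl, smul_zero])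
    fun _ ↦ zero_smul ℕ _, nsmul_eq_mul]

lemma _root_.IsGraded.vars_apply_X_subset {K : Type*} [CommRing K] {k : Fin 3} {w : Fin 3 → ℤ}
    {φ : MvPolynomial (Fin 3) K ≃ₐ[K] MvPolynomial (Fin 3) K} (hφ : IsGraded w φ)
    (hw : ∀ l ≠ k, w l = 0) (hk : w k ≠ 0) (a : Fin 2) :
    ↑(φ (X (k.succAbove a))).vars ⊆ Set.range k.succAbove := by
  rw [Fin.range_succAbove, Set.subset_compl_singleton_iff, Finset.mem_coe,
    mem_vars_iff_mem_support]
  rintro ⟨s, hs, hsk⟩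
  have h := hφ.apply_X _ (mem_support_iff.1 hs)
  rw [weight_eq_mul_of_forall_ne hw, hw _ (Fin.succAbove_ne k a)] at h
  exact (mul_ne_zero (by exact_mod_cast Finsupp.mem_support_iff.1 hsk) hk) h

variable {K : Type*} [Field K] [CharZero K] {k : Fin 3} {w : Fin 3 → ℤ}
  {φ : MvPolynomial (Fin 3) K ≃ₐ[K] MvPolynomial (Fin 3) K}

lemma _root_.IsGraded.exists_totalDegree_sub_lt (hφ : IsGraded w φ) (hw : ∀ l ≠ k, w l = 0)
    (hk : w k ≠ 0) {l : Fin 3} (hl : 1 < (φ (X l)).totalDegree) :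
    ∃ i j, i ≠ j ∧ i ≠ k ∧ j ≠ k ∧ ∃ (c : K) (m : ℕ),
      (φ (X i) - C c * φ (X j) ^ m).totalDegree < (φ (X i)).totalDegree := by
  have he : Function.Injective k.succAbove := Fin.succAbove_right_injective
  obtain ⟨v, hφk⟩ := hφ.exists_apply_X_eq_C_mul (k := k) fun s hs hsk ↦ by
    rw [weight_eq_mul_of_forall_ne hw, hsk] at hs
    simp [eq_comm, hk] at hs
  set p : Fin 2 → MvPolynomial (Fin 2) K := fun a ↦ killCompl he (φ (X (k.succAbove a)))
  have hrename (a : Fin 2) : φ (X (k.succAbove a)) = rename k.succAbove (p a) :=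
    (rename_killCompl_of_vars_subset he (hφ.vars_apply_X_subset hw hk a)).symm
  have hp : Function.Surjective (aeval (R := K) p) := surjective_aeval_killCompl he fun l hl ↦ by
    obtain rfl : l = k := by simpa [Fin.range_succAbove] using hl
    simp [hφk, killCompl]
  obtain ⟨a, rfl⟩ : ∃ a, k.succAbove a = l := Fin.exists_succAbove_eq fun hlk ↦ by
    rw [hlk, hφk] at hl
    exact hl.not_ge (isHomogeneous_C_mul_X _ _).totalDegree_le
  rw [hrename] at hl
  obtain ⟨a, b, hab, c, m, hlt⟩ := exists_totalDegree_sub_lt_of_surjective hp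
    (hl.trans_le (totalDegree_rename_le _ _))
  refine ⟨_, _, he.ne hab, Fin.succAbove_ne k a, Fin.succAbove_ne k b, c, m, ?_⟩
  calc (φ (X (k.succAbove a)) - C c * φ (X (k.succAbove b)) ^ m).totalDegree
      = (rename k.succAbove (p a - C c * p b ^ m)).totalDegree := by
        simp only [hrename, map_sub, map_mul, map_pow, rename_C]
    _ ≤ (p a - C c * p b ^ m).totalDegree := totalDegree_rename_le _ _
    _ < (p a).totalDegree := hlt
    _ ≤ (φ (X (k.succAbove a))).totalDegree := totalDegree_killCompl_le he _

lemma _root_.IsGraded.isGradedTame_of_forall_weight_eq_zero (hφ : IsGraded w φ)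
    (hw : ∀ l ≠ k, w l = 0) (hk : w k ≠ 0) : IsGradedTame w φ := by
  induction hn : ∑ l, (φ (X l)).totalDegree using Nat.strong_induction_on generalizing φ with
  | _ n ih =>
  by_cases! hdeg : ∀ l, (φ (X l)).totalDegree ≤ 1
  · exact hφ.isGradedTame_of_totalDegree_le_one hdeg
  obtain ⟨l, hl⟩ := hdeg
  obtain ⟨i, j, hij, hi, hj, c, m, hlt⟩ := hφ.exists_totalDegree_sub_lt hw hk hl
  have hvars : i ∉ (C (-c) * X j ^ m : MvPolynomial (Fin 3) K).vars := by
    refine notMem_vars_of_pderiv_eq_zero ?_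
    simp [pderiv_X_of_ne hij.symm, Derivation.leibniz_pow]
  have hFw : (C (-c) * X j ^ m : MvPolynomial (Fin 3) K).IsWeightedHomogeneous w (w i) := by
    simpa [hw i hi, hw j hj] using ((isWeightedHomogeneous_X K w j).pow m).C_mul (-c)
  obtain ⟨ψ, hψ, hψi, hψ_ne, htame⟩ := hφ.exists_mul_triangularAut 1 hvars hFw
  have hlt' : (ψ (X i)).totalDegree < (φ (X i)).totalDegree := by
    rwa [hψi, Units.val_one, C_1, one_mul, map_mul, map_pow, algEquiv_C, C_neg, neg_mul,
      ← sub_eq_add_neg]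
  refine htame (ih _ ?_ hψ rfl)
  rw [← hn]
  refine Finset.sum_lt_sum (fun l _ ↦ ?_) ⟨i, Finset.mem_univ i, hlt'⟩
  obtain rfl | hli := eq_or_ne l i
  · exact hlt'.le
  · rw [hψ_ne l hli]

end SingleWeight

end GradedTame

theorem graded_automorphism_is_graded_tame_of_some_zero_weight_general
    {K : Type*} [Field K] [CharZero K] (w : Fin 3 → ℤ) (hzero : ∃ i, w i = 0) (hw : w ≠ 0)
    (φ : MvPolynomial (Fin 3) K ≃ₐ[K] MvPolynomial (Fin 3) K) (hφ : IsGraded w φ) :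
    IsGradedTame w φ := by
  obtain ⟨i, hi⟩ := hzero
  obtain ⟨j, k, hij, hik, hjk⟩ : ∃ j k, i ≠ j ∧ i ≠ k ∧ j ≠ k := by
    clear * -
    decide +revert
  obtain hneg | hzero | hpos := lt_trichotomy (w j * w k) 0
  · exact hφ.isGradedTame_of_weight_mul_neg hij hik hjk hi hneg
  · obtain ⟨l, hl⟩ := Function.ne_iff.1 hw
    refine hφ.isGradedTame_of_forall_weight_eq_zero (k := l) (fun m hm ↦ ?_) hl
    have hmem (n : Fin 3) : n = i ∨ n = j ∨ n = k := by
      simpa [GradedTame.univ_eq_of_ne hij hik hjk] using Finset.mem_univ n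
    obtain h | h := mul_eq_zero.1 hzero <;> obtain rfl | rfl | rfl := hmem l <;>
      obtain rfl | rfl | rfl := hmem m <;> simp_all
  · exact hφ.isGradedTame_of_weight_mul_pos hij hik hjk hi hpos

/-- Let `Γ` be the `ℤ`-grading of `K[x,y,z]` with `deg x = a`, `deg y = b`,
`deg z = -c`, where `a ≥ b ≥ 0`, `c ≥ 0`, at least one of `a, b, c` is zero and
`(a,b,c) ≠ (0,0,0)`. Then every `Γ`-graded automorphism of `K[x,y,z]` is graded-tame.
Here `x = X 0`, `y = X 1`, `z = X 2`. -/
theorem graded_automorphism_is_graded_tame_of_some_zero_weight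
    {K : Type*} [Field K] [IsAlgClosed K] [CharZero K]
    (a b c : ℕ) (hab : b ≤ a)
    (hzero : a = 0 ∨ b = 0 ∨ c = 0)
    (hne : ¬ (a = 0 ∧ b = 0 ∧ c = 0))
    (φ : MvPolynomial (Fin 3) K ≃ₐ[K] MvPolynomial (Fin 3) K)
    (hφ : IsGraded ![(a : ℤ), (b : ℤ), -(c : ℤ)] φ) :
    IsGradedTame ![(a : ℤ), (b : ℤ), -(c : ℤ)] φ := by
  refine graded_automorphism_is_graded_tame_of_some_zero_weight_general _ ?_ (fun h ↦ ?_) φ hφ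
  · simpa [Fin.exists_fin_succ] using hzero
  · exact hne (by simpa [funext_iff, Fin.forall_fin_succ] using h)
end
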